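/- Define, for f : (−1,1) → ℂ, T₁f(x) := ∑_{j∈ℤ, j≠0} (1/(2j+x)²)·f(−1/(2j+x)), and, for f : (0,1) → ℂ, S₁f(x) := ∑_{j=1}^∞ (1/(j+x)²)·f(1/(j+x)). Then: (a) for every f ∈ L¹((−1,1), ℂ) the series defining T₁f(x) converges absolutely for almost every x ∈ (−1,1), T₁f ∈ L¹((−1,1)) with ∫_{−1}^1 |T₁f| ≤ ∫_{−1}^1 |f|, and if ∫_{−1}^1 f(t) dt = 0 then ∫_{−1}^1 |T₁ⁿ f| → 0 as n → ∞; (b) for every f ∈ L¹((0,1), ℂ) with ∫₀^1 f(t) dt = 0, one has ∫₀^1 |S₁ⁿ f| → 0 as n → ∞. -/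

import Mathlib

open MeasureTheory Filter

/-- The transfer operator `T₁` of the Gauss-type map `τ₁(x) = {-1/x} mod 2ℤ`. -/
noncomputable def T1op (f : ℝ → ℂ) (x : ℝ) : ℂ :=
  ∑' j : {j : ℤ // j ≠ 0},
    ((1 / (2 * ((j : ℤ) : ℝ) + x) ^ 2 : ℝ) : ℂ) * f (-1 / (2 * ((j : ℤ) : ℝ) + x))

/-- The transfer operator `S₁` of the classical Gauss map `σ₁(x) = {1/x} mod 1`
(summation over `j ≥ 1`, written as `j + 1` with `j : ℕ`). -/
noncomputable def S1op (f : ℝ → ℂ) (x : ℝ) : ℂ :=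
  ∑' j : ℕ, ((1 / (((j : ℝ) + 1) + x) ^ 2 : ℝ) : ℂ) * f (1 / (((j : ℝ) + 1) + x))

open Topology

set_option linter.unusedSectionVars false

section AbstractLSpace

variable {E : Type*} [NormedAddCommGroup E] [Lattice E] [HasSolidNorm E] [IsOrderedAddMonoid E]
  [NormedSpace ℝ E]

/-- A positive operator on an abstract `L`-space (the norm is additive on the positive cone) that
preserves the norm of positive elements. -/
structure IsMarkovOperator (T : E →L[ℝ] E) : Prop where
  norm_add : ∀ x y : E, 0 ≤ x → 0 ≤ y → ‖x + y‖ = ‖x‖ + ‖y‖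
  map_nonneg : ∀ x : E, 0 ≤ x → 0 ≤ T x
  norm_map : ∀ x : E, 0 ≤ x → ‖T x‖ = ‖x‖

namespace IsMarkovOperator

variable {T : E →L[ℝ] E}

theorem norm_posPart_add_norm_negPart (hT : IsMarkovOperator T) (x : E) :
    ‖x⁺‖ + ‖x⁻‖ = ‖x‖ := by
  rw [← hT.norm_add _ _ (posPart_nonneg x) (negPart_nonneg x), posPart_add_negPart,
    norm_abs_eq_norm]

theorem norm_map_le (hT : IsMarkovOperator T) (x : E) : ‖T x‖ ≤ ‖x‖ := by
  rw [← hT.norm_posPart_add_norm_negPart x, ← hT.norm_map _ (posPart_nonneg x),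
    ← hT.norm_map _ (negPart_nonneg x)]
  conv_lhs => rw [← posPart_sub_negPart x, map_sub]
  exact norm_sub_le _ _

theorem pow (hT : IsMarkovOperator T) (n : ℕ) : IsMarkovOperator (T ^ n) := by
  induction n with
  | zero => exact ⟨hT.norm_add, fun x hx => by simpa using hx, fun x _ => by simp⟩
  | succ n ih =>
    refine ⟨hT.norm_add, fun x hx => ?_, fun x hx => ?_⟩
    · rw [pow_succ]
      exact ih.map_nonneg _ (hT.map_nonneg x hx)
    · rw [pow_succ]
      exact (ih.norm_map _ (hT.map_nonneg x hx)).trans (hT.norm_map x hx)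

theorem norm_sub_add_two_mul_norm_inf (hT : IsMarkovOperator T) {p r : E} (hp : 0 ≤ p)
    (hr : 0 ≤ r) : ‖p - r‖ + 2 * ‖p ⊓ r‖ = ‖p‖ + ‖r‖ := by
  have hpr : 0 ≤ p ⊓ r := le_inf hp hr
  have key : |p - r| + (p ⊓ r + p ⊓ r) = p + r := by
    have := two_nsmul_inf_eq_add_sub_abs_sub p r
    rw [abs_sub_comm] at this
    rw [two_nsmul] at this
    rw [this]
    abel
  rw [← hT.norm_add p r hp hr, ← key, hT.norm_add _ _ (abs_nonneg _) (add_nonneg hpr hpr),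
    hT.norm_add _ _ hpr hpr, norm_abs_eq_norm]
  ring

theorem norm_posPart_sub_norm_negPart (hT : IsMarkovOperator T) {p r : E} (hp : 0 ≤ p)
    (hr : 0 ≤ r) : ‖(p - r)⁺‖ - ‖(p - r)⁻‖ = ‖p‖ - ‖r‖ := by
  have h : p + (p - r)⁻ = r + (p - r)⁺ := by
    have := posPart_sub_negPart (p - r)
    rw [sub_eq_sub_iff_add_eq_add] at this
    rw [← this]
    abel
  have h' := congrArg norm h
  rw [hT.norm_add _ _ hp (negPart_nonneg _), hT.norm_add _ _ hr (posPart_nonneg _)] at h'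
  linarith

theorem norm_posPart_sub_norm_negPart_map (hT : IsMarkovOperator T) (x : E) :
    ‖(T x)⁺‖ - ‖(T x)⁻‖ = ‖x⁺‖ - ‖x⁻‖ := by
  have := hT.norm_posPart_sub_norm_negPart (hT.map_nonneg _ (posPart_nonneg x))
    (hT.map_nonneg _ (negPart_nonneg x))
  rwa [← map_sub, posPart_sub_negPart, hT.norm_map _ (posPart_nonneg x),
    hT.norm_map _ (negPart_nonneg x)] at this

/-- The asymptotic seminorm `lim ‖T ^ n x‖` of a contraction. -/
noncomputable def _root_.asymptoticNorm (T : E →L[ℝ] E) (x : E) : ℝ := ⨅ n : ℕ, ‖(T ^ n) x‖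

theorem norm_pow_le (hT : IsMarkovOperator T) (n : ℕ) (x : E) : ‖(T ^ n) x‖ ≤ ‖x‖ :=
  (hT.pow n).norm_map_le x

theorem tendsto_asymptoticNorm (hT : IsMarkovOperator T) (x : E) :
    Tendsto (fun n : ℕ => ‖(T ^ n) x‖) atTop (𝓝 (asymptoticNorm T x)) := by
  refine tendsto_atTop_ciInf (antitone_nat_of_succ_le fun n => ?_) ⟨0, ?_⟩
  · rw [pow_succ']
    exact hT.norm_map_le _
  · rintro _ ⟨n, rfl⟩
    exact norm_nonneg _

theorem asymptoticNorm_le_norm_pow (T : E →L[ℝ] E) (n : ℕ) (x : E) :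
    asymptoticNorm T x ≤ ‖(T ^ n) x‖ :=
  ciInf_le ⟨0, by rintro _ ⟨n, rfl⟩; exact norm_nonneg _⟩ n

theorem asymptoticNorm_le_norm (T : E →L[ℝ] E) (x : E) : asymptoticNorm T x ≤ ‖x‖ := by
  simpa using asymptoticNorm_le_norm_pow T 0 x

theorem asymptoticNorm_nonneg (T : E →L[ℝ] E) (x : E) : 0 ≤ asymptoticNorm T x :=
  Real.iInf_nonneg fun _ => norm_nonneg _

theorem asymptoticNorm_add_le (hT : IsMarkovOperator T) (x y : E) :
    asymptoticNorm T (x + y) ≤ asymptoticNorm T x + asymptoticNorm T y :=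
  le_of_tendsto_of_tendsto' (hT.tendsto_asymptoticNorm _)
    ((hT.tendsto_asymptoticNorm x).add (hT.tendsto_asymptoticNorm y))
    fun n => by rw [map_add]; exact norm_add_le _ _

theorem asymptoticNorm_smul (hT : IsMarkovOperator T) (r : ℝ) (x : E) :
    asymptoticNorm T (r • x) = |r| * asymptoticNorm T x :=
  tendsto_nhds_unique (hT.tendsto_asymptoticNorm _)
    (((hT.tendsto_asymptoticNorm x).const_mul |r|).congr fun n => by
      rw [map_smul, norm_smul, Real.norm_eq_abs])

theorem asymptoticNorm_sub_le (hT : IsMarkovOperator T) (x y : E) :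
    asymptoticNorm T (x - y) ≤ asymptoticNorm T x + asymptoticNorm T y := by
  have := hT.asymptoticNorm_smul (-1) y
  rw [abs_neg, abs_one, one_mul, neg_one_smul] at this
  rw [sub_eq_add_neg, ← this]
  exact hT.asymptoticNorm_add_le _ _

theorem continuous_asymptoticNorm (hT : IsMarkovOperator T) :
    Continuous (asymptoticNorm T) := by
  refine (LipschitzWith.of_le_add fun x y => ?_ : LipschitzWith 1 (asymptoticNorm T)).continuous
  have h1 := hT.asymptoticNorm_add_le y (x - y)
  have h2 := asymptoticNorm_le_norm T (x - y)
  rw [add_sub_cancel] at h1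
  rw [dist_eq_norm]
  linarith

/-- If every positive element is asymptotically absorbed by `C`, then the positive and negative
parts of an orbit are shadowed by elements of `C` that stay almost disjoint forever. -/
theorem exists_almost_disjoint (hT : IsMarkovOperator T) {C : Set E}
    (hC : ∀ g ∈ C, T g ∈ C)
    (habs : ∀ u : E, 0 ≤ u → ∀ δ > 0, ∃ m : ℕ, ∃ g ∈ C, ‖(T ^ m) u - g‖ ≤ δ)
    (x : E) {δ : ℝ} (hδ : 0 < δ) :
    ∃ N : ℕ, ∃ g ∈ C, ∃ g' ∈ C, (∀ k : ℕ, ‖(T ^ k) g ⊓ (T ^ k) g'‖ ≤ 3 * δ) ∧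
      asymptoticNorm T x ≤ ‖g‖ + ‖g'‖ + 2 * δ ∧ ‖(T ^ N) x - (g - g')‖ ≤ 2 * δ ∧
      |‖g‖ - ‖g'‖ - (‖x⁺‖ - ‖x⁻‖)| ≤ 2 * δ := by
  have hCpow : ∀ (k : ℕ), ∀ g ∈ C, (T ^ k) g ∈ C := by
    intro k
    induction k with
    | zero => intro g hg; simpa using hg
    | succ k ih => intro g hg; rw [pow_succ]; exact ih _ (hC g hg)
  obtain ⟨n, hn⟩ := ((hT.tendsto_asymptoticNorm x).eventually
    (gt_mem_nhds (show asymptoticNorm T x < asymptoticNorm T x + δ by linarith))).exists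
  set y := (T ^ n) x with hy
  have later : ∀ u : E, ∀ m : ℕ, ∀ g ∈ C, ‖(T ^ m) u - g‖ ≤ δ → ∀ k : ℕ,
      ∃ g' ∈ C, ‖(T ^ (k + m)) u - g'‖ ≤ δ := by
    intro u m g hg hug k
    refine ⟨(T ^ k) g, hCpow k g hg, ?_⟩
    rw [pow_add, mul_apply_eq_comp, ← map_sub]
    exact (hT.norm_pow_le k _).trans hug
  obtain ⟨m₁, g₁, hg₁, h₁⟩ := habs y⁺ (posPart_nonneg y) δ hδ
  obtain ⟨m₂, g₂, hg₂, h₂⟩ := habs y⁻ (negPart_nonneg y) δ hδ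
  obtain ⟨g, hg, hyg⟩ := later _ m₁ g₁ hg₁ h₁ m₂
  obtain ⟨g', hg', hyg'⟩ := later _ m₂ g₂ hg₂ h₂ m₁
  rw [add_comm] at hyg
  set m := m₁ + m₂
  have hp := (hT.pow m).norm_map _ (posPart_nonneg y)
  have hr := (hT.pow m).norm_map _ (negPart_nonneg y)
  have hsum := hT.norm_posPart_add_norm_negPart y
  have hmean := (hT.pow n).norm_posPart_sub_norm_negPart_map x
  rw [← hy] at hmean
  have e1 := abs_norm_sub_norm_le ((T ^ m) y⁺) g
  have e2 := abs_norm_sub_norm_le ((T ^ m) y⁻) g'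
  rw [abs_le] at e1 e2
  have hqy : asymptoticNorm T x ≤ ‖y‖ := asymptoticNorm_le_norm_pow T n x
  refine ⟨m + n, g, hg, g', hg', fun k => ?_, ?_, ?_, ?_⟩
  · have hk : (T ^ (k + m)) y⁺ - (T ^ (k + m)) y⁻ = (T ^ (k + m + n)) x := by
      rw [← map_sub, posPart_sub_negPart, hy, pow_add _ (k + m) n]
      rfl
    have h3 := (hT.pow (k + m)).norm_sub_add_two_mul_norm_inf
      ((hT.pow (k + m)).map_nonneg _ (posPart_nonneg y))
      ((hT.pow (k + m)).map_nonneg _ (negPart_nonneg y))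
    rw [hk, (hT.pow (k + m)).norm_map _ (posPart_nonneg y),
      (hT.pow (k + m)).norm_map _ (negPart_nonneg y)] at h3
    have h4 := asymptoticNorm_le_norm_pow T (k + m + n) x
    have h5 := norm_inf_sub_inf_le_add_norm ((T ^ k) g) ((T ^ k) g') ((T ^ (k + m)) y⁺)
      ((T ^ (k + m)) y⁻)
    have h6 : ‖(T ^ k) g - (T ^ (k + m)) y⁺‖ ≤ δ := by
      rw [pow_add, mul_apply_eq_comp, ← map_sub]
      refine (hT.norm_pow_le k _).trans ?_
      rwa [norm_sub_rev]
    have h7 : ‖(T ^ k) g' - (T ^ (k + m)) y⁻‖ ≤ δ := by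
      rw [pow_add, mul_apply_eq_comp, ← map_sub]
      refine (hT.norm_pow_le k _).trans ?_
      rwa [norm_sub_rev]
    have h8 := norm_sub_norm_le ((T ^ k) g ⊓ (T ^ k) g')
      ((T ^ (k + m)) y⁺ ⊓ (T ^ (k + m)) y⁻)
    linarith
  · linarith
  · have hk : (T ^ (m + n)) x = (T ^ m) y⁺ - (T ^ m) y⁻ := by
      rw [← map_sub, posPart_sub_negPart, hy, pow_add]
      rfl
    rw [hk, sub_sub_sub_comm]
    exact (norm_sub_le _ _).trans (by linarith)
  · rw [abs_le]
    constructor <;> linarith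

/-- A Markov operator all of whose positive orbits are absorbed by a cone of elements dominating
a multiple of a fixed one is asymptotically stable. -/
theorem asymptoticNorm_eq_zero_of_lower_bound (hT : IsMarkovOperator T) {C : Set E}
    (hC : ∀ g ∈ C, T g ∈ C)
    (habs : ∀ u : E, 0 ≤ u → ∀ δ > 0, ∃ m : ℕ, ∃ g ∈ C, ‖(T ^ m) u - g‖ ≤ δ)
    [PosSMulMono ℝ E] {e : E} (he : 0 < e) (hlow : ∀ g ∈ C, ‖g‖ • e ≤ g)
    {x : E} (hx : ‖x⁺‖ = ‖x⁻‖) : asymptoticNorm T x = 0 := by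
  by_contra hne
  have ha : 0 < asymptoticNorm T x := lt_of_le_of_ne (asymptoticNorm_nonneg T x) (Ne.symm hne)
  set a := asymptoticNorm T x
  have hen : 0 < ‖e‖ := norm_pos_iff.2 he.ne'
  obtain ⟨δ, hδ, hδ1⟩ : ∃ δ : ℝ, 0 < δ ∧ 3 * δ < (a / 2 - 2 * δ) * ‖e‖ := by
    refine ⟨a * ‖e‖ / (4 * (3 + 2 * ‖e‖)), by positivity, ?_⟩
    have h : a * ‖e‖ / (4 * (3 + 2 * ‖e‖)) * (3 + 2 * ‖e‖) = a * ‖e‖ / 4 := by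
      field_simp
    have : 0 < a * ‖e‖ := by positivity
    nlinarith
  obtain ⟨N, g, hg, g', hg', hdisj, hsum, -, hmean⟩ :=
    hT.exists_almost_disjoint hC habs x hδ
  rw [hx, sub_self, sub_zero, abs_le] at hmean
  have h0 := hdisj 0
  simp only [pow_zero, one_apply_eq_self] at h0
  set s := a / 2 - 2 * δ
  have hs : 0 < s := by
    by_contra h
    nlinarith
  have smono : ∀ r : ℝ, s ≤ r → s • e ≤ r • e := by
    intro r hr
    rw [← sub_nonneg, ← sub_smul]
    have := smul_le_smul_of_nonneg_left he.le (sub_nonneg.2 hr)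
    rwa [smul_zero] at this
  have hsg : s ≤ ‖g‖ := by
    simp only [s, a]
    linarith
  have hsg' : s ≤ ‖g'‖ := by
    simp only [s, a]
    linarith
  have hle : s • e ≤ g ⊓ g' :=
    le_inf ((smono _ hsg).trans (hlow g hg)) ((smono _ hsg').trans (hlow g' hg'))
  have hse : 0 ≤ s • e := by
    have := smul_le_smul_of_nonneg_left he.le hs.le
    rwa [smul_zero] at this
  have := norm_le_norm_of_abs_le_abs
    (show |s • e| ≤ |g ⊓ g'| by rwa [abs_of_nonneg hse, abs_of_nonneg (hse.trans hle)])
  rw [norm_smul, Real.norm_eq_abs, abs_of_pos hs] at this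
  linarith

/-- If every positive orbit is absorbed by an invariant set on which `T` dominates a multiple of
the identity, then `T ^ n (f - T f) → 0`. -/
theorem asymptoticNorm_sub_map_eq_zero (hT : IsMarkovOperator T) {C : Set E}
    (hC : ∀ g ∈ C, T g ∈ C) (hpos : ∀ g ∈ C, 0 ≤ g)
    (habs : ∀ u : E, 0 ≤ u → ∀ δ > 0, ∃ m : ℕ, ∃ g ∈ C, ‖(T ^ m) u - g‖ ≤ δ)
    [PosSMulMono ℝ E] {A : ℝ} (hA : 1 ≤ A) (hlow : ∀ g ∈ C, g ≤ A • T g)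
    (f : E) : asymptoticNorm T (f - T f) = 0 := by
  by_contra hne
  set x := f - T f with hxdef
  have ha : 0 < asymptoticNorm T x := lt_of_le_of_ne (asymptoticNorm_nonneg T x) (Ne.symm hne)
  set a := asymptoticNorm T x
  have hA0 : 0 ≤ A := zero_le_one.trans hA
  obtain ⟨K, hK⟩ := exists_nat_gt ((2 * ‖f‖ + 1) / a)
  rw [div_lt_iff₀ ha] at hK
  obtain ⟨δ, hδ, hδ1⟩ : ∃ δ : ℝ, 0 < δ ∧ (4 * K + 6 * (K * A ^ K)) * δ < 1 := by
    refine ⟨1 / (4 * K + 6 * (K * A ^ K) + 1), by positivity, ?_⟩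
    rw [mul_one_div, div_lt_one (by positivity)]
    linarith
  obtain ⟨N, g, hg, g', hg', hdisj, hsum, hNx, -⟩ :=
    hT.exists_almost_disjoint hC habs x hδ
  have hCpow : ∀ (k : ℕ), ∀ g ∈ C, (T ^ k) g ∈ C := by
    intro k
    induction k with
    | zero => intro g hg; simpa using hg
    | succ k ih => intro g hg; rw [pow_succ]; exact ih _ (hC g hg)
  have dom : ∀ g ∈ C, ∀ i k : ℕ, (T ^ k) g ≤ A ^ i • (T ^ (k + i)) g := by
    intro g hg i k
    induction i with
    | zero => simp
    | succ i ih =>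
      refine ih.trans ?_
      rw [pow_succ A, mul_smul, ← add_assoc, pow_succ' T, mul_apply_eq_comp]
      exact smul_le_smul_of_nonneg_left (hlow _ (hCpow _ g hg)) (by positivity)
  have domK : ∀ g ∈ C, ∀ k ∈ Finset.range K, (T ^ k) g ≤ A ^ K • (T ^ K) g := by
    intro g hg k hk
    have hkK : k ≤ K := (Finset.mem_range.1 hk).le
    have h1 := dom g hg (K - k) k
    rw [Nat.add_sub_cancel' hkK] at h1
    refine h1.trans ?_
    rw [← sub_nonneg, ← sub_smul]
    refine smul_nonneg ?_ ((hT.pow K).map_nonneg _ (hpos g hg))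
    exact sub_nonneg.2 (pow_le_pow_right₀ hA (Nat.sub_le _ _))
  set P : E → E := fun g => ∑ k ∈ Finset.range K, (T ^ k) g with hP
  have hPnn : ∀ g ∈ C, 0 ≤ P g := fun g hg =>
    Finset.sum_nonneg fun k _ => (hT.pow k).map_nonneg _ (hpos g hg)
  have hPnorm : ∀ g ∈ C, ‖P g‖ = K * ‖g‖ := by
    intro g hg
    have : ∀ n : ℕ, ‖∑ k ∈ Finset.range n, (T ^ k) g‖ = n * ‖g‖ := by
      intro n
      induction n with
      | zero => simp
      | succ n ih =>
        rw [Finset.sum_range_succ, hT.norm_add _ _ (Finset.sum_nonneg fun k _ =>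
          (hT.pow k).map_nonneg _ (hpos g hg)) ((hT.pow n).map_nonneg _ (hpos g hg)), ih,
          (hT.pow n).norm_map _ (hpos g hg)]
        push_cast
        ring
    exact this K
  set B : ℝ := K * A ^ K with hB
  have hB0 : 0 ≤ B := by positivity
  have hPdom : ∀ g ∈ C, P g ≤ B • (T ^ K) g := by
    intro g hg
    calc P g ≤ ∑ k ∈ Finset.range K, A ^ K • (T ^ K) g := Finset.sum_le_sum (domK g hg)
      _ = B • (T ^ K) g := by
        rw [Finset.sum_const, Finset.card_range, hB, mul_smul, Nat.cast_smul_eq_nsmul]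
  have hinf : P g ⊓ P g' ≤ B • ((T ^ K) g ⊓ (T ^ K) g') := by
    rcases hB0.eq_or_lt with h0 | h0
    · have := hPdom g hg
      rw [← h0, zero_smul] at this ⊢
      exact inf_le_left.trans this
    · have hinv : 0 ≤ B⁻¹ := by positivity
      have h1 : B⁻¹ • (P g ⊓ P g') ≤ (T ^ K) g ⊓ (T ^ K) g' := by
        refine le_inf ?_ ?_
        · have := smul_le_smul_of_nonneg_left (inf_le_left.trans (hPdom g hg) :
            P g ⊓ P g' ≤ _) hinv
          rwa [inv_smul_smul₀ h0.ne'] at this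
        · have := smul_le_smul_of_nonneg_left (inf_le_right.trans (hPdom g' hg') :
            P g ⊓ P g' ≤ _) hinv
          rwa [inv_smul_smul₀ h0.ne'] at this
      have := smul_le_smul_of_nonneg_left h1 hB0
      rwa [smul_inv_smul₀ h0.ne'] at this
  have hinfn : ‖P g ⊓ P g'‖ ≤ B * (3 * δ) := by
    have h0 : 0 ≤ P g ⊓ P g' := le_inf (hPnn g hg) (hPnn g' hg')
    have := norm_le_norm_of_abs_le_abs (show |P g ⊓ P g'| ≤ |B • ((T ^ K) g ⊓ (T ^ K) g')| by
      rwa [abs_of_nonneg h0, abs_of_nonneg (h0.trans hinf)])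
    rw [norm_smul, Real.norm_eq_abs, abs_of_nonneg hB0] at this
    exact this.trans (mul_le_mul_of_nonneg_left (hdisj K) hB0)
  have hexp := hT.norm_sub_add_two_mul_norm_inf (hPnn g hg) (hPnn g' hg')
  rw [hPnorm g hg, hPnorm g' hg'] at hexp
  have htel : P ((T ^ N) x) = (T ^ N) f - (T ^ K) ((T ^ N) f) := by
    have : ∀ n : ℕ, ∑ k ∈ Finset.range n, (T ^ k) ((T ^ N) x)
        = (T ^ N) f - (T ^ n) ((T ^ N) f) := by
      intro n
      induction n with
      | zero => simp
      | succ n ih =>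
        rw [Finset.sum_range_succ, ih, hxdef, map_sub, map_sub,
          ← mul_apply_eq_comp (T ^ N) T, ← pow_succ, pow_succ', pow_succ T n,
          mul_apply_eq_comp, mul_apply_eq_comp]
        abel
    exact this K
  have hPx : ‖P ((T ^ N) x)‖ ≤ 2 * ‖f‖ := by
    rw [htel]
    have h1 := norm_sub_le ((T ^ N) f) ((T ^ K) ((T ^ N) f))
    have h2 := hT.norm_pow_le K ((T ^ N) f)
    have h3 := hT.norm_pow_le N f
    linarith
  have hPdiff : ‖P g - P g' - P ((T ^ N) x)‖ ≤ K * (2 * δ) := by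
    have h1 : P g - P g' - P ((T ^ N) x)
        = ∑ k ∈ Finset.range K, (T ^ k) (g - g' - (T ^ N) x) := by
      simp only [hP, map_sub, Finset.sum_sub_distrib]
    rw [h1]
    refine (norm_sum_le_of_le _ fun k _ => (hT.norm_pow_le k _).trans
      (by rwa [norm_sub_rev] : _ ≤ 2 * δ)).trans ?_
    simp
  have h9 := norm_le_norm_add_norm_sub (P ((T ^ N) x)) (P g - P g')
  have hKa : (K : ℝ) * a ≤ K * (‖g‖ + ‖g'‖ + 2 * δ) :=
    mul_le_mul_of_nonneg_left hsum (Nat.cast_nonneg K)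
  have h10 : ‖P ((T ^ N) x) - (P g - P g')‖ ≤ K * (2 * δ) := by rwa [norm_sub_rev]
  have h11 : ‖P g - P g'‖ ≤ 2 * ‖f‖ + K * (2 * δ) := by linarith
  nlinarith

end IsMarkovOperator

end AbstractLSpace

section Transfer

instance Lp.instPosSMulMonoReal {α : Type*} [MeasurableSpace α] {p : ENNReal} {μ : Measure α} :
    PosSMulMono ℝ (Lp ℝ p μ) where
  smul_le_smul_of_nonneg_left r hr x y hxy := by
    rw [← Lp.coeFn_le] at hxy ⊢
    filter_upwards [hxy, Lp.coeFn_smul r x, Lp.coeFn_smul r y] with t ht h1 h2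
    rw [h1, h2]
    exact mul_le_mul_of_nonneg_left ht hr

/-- A countable family of inverse branches `x ↦ ε / (n j + x)` of an expanding interval map,
whose images tile the interval `(lo, hi)` up to a countable set. -/
structure InversionSystem (J : Type*) where
  n : J → ℝ
  ε : ℝ
  lo : ℝ
  hi : ℝ
  exceptional : Set ℝ
  sq_ε : ε ^ 2 = 1
  add_ne_zero : ∀ j, ∀ x ∈ Set.Ioo lo hi, n j + x ≠ 0
  mapsTo : ∀ j, ∀ x ∈ Set.Ioo lo hi, ε / (n j + x) ∈ Set.Ioo lo hi
  index_unique : ∀ i j, ∀ x ∈ Set.Ioo lo hi, ∀ y ∈ Set.Ioo lo hi, n i + x = n j + y → i = j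
  countable_exceptional : exceptional.Countable
  exists_branch : ∀ y ∈ Set.Ioo lo hi, y ∉ exceptional →
    ∃ j, ∃ x ∈ Set.Ioo lo hi, ε / (n j + x) = y

namespace InversionSystem

variable {J : Type*} (s : InversionSystem J)

/-- The interval on which the map acts. -/
def I : Set ℝ := Set.Ioo s.lo s.hi

/-- Lebesgue measure on the interval. -/
noncomputable def μ : Measure ℝ := volume.restrict s.I

instance : IsFiniteMeasure s.μ := by
  unfold μ I
  infer_instance

theorem measurableSet_I : MeasurableSet s.I := measurableSet_Ioo

theorem ε_ne_zero : s.ε ≠ 0 := by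
  intro h
  have := s.sq_ε
  simp [h] at this

theorem abs_ε : |s.ε| = 1 := by
  have := s.sq_ε
  rwa [← sq_abs, pow_eq_one_iff_of_nonneg (abs_nonneg _) two_ne_zero] at this

theorem ae_mem : ∀ᵐ x ∂s.μ, x ∈ s.I := ae_restrict_mem s.measurableSet_I

/-- The contribution of one inverse branch to the transfer operator. -/
noncomputable def branch {F : Type*} [SMul ℝ F] (j : J) (f : ℝ → F) (x : ℝ) : F :=
  (1 / (s.n j + x) ^ 2 : ℝ) • f (s.ε / (s.n j + x))

/-- The transfer operator on functions. -/
noncomputable def transfer {F : Type*} [NormedAddCommGroup F] [NormedSpace ℝ F]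
    (f : ℝ → F) (x : ℝ) : F :=
  ∑' j, s.branch j f x

variable [Countable J]

theorem lintegral_transfer {g : ℝ → ENNReal} (hg : Measurable g) :
    ∫⁻ x, ∑' j, ENNReal.ofReal (1 / (s.n j + x) ^ 2) * g (s.ε / (s.n j + x)) ∂s.μ
      = ∫⁻ x, g x ∂s.μ := by
  have hinj : ∀ j, Set.InjOn (fun x => s.ε / (s.n j + x)) s.I := by
    intro j x hx y hy hxy
    have h1 := s.add_ne_zero j x hx
    have h2 := s.add_ne_zero j y hy
    have := s.ε_ne_zero
    field_simp at hxy
    linarith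
  have hder : ∀ j, ∀ x ∈ s.I,
      HasDerivWithinAt (fun x => s.ε / (s.n j + x)) (-s.ε / (s.n j + x) ^ 2) s.I x := by
    intro j x hx
    refine (((hasDerivAt_const x s.ε).fun_div ((hasDerivAt_id' x).const_add (s.n j))
      (s.add_ne_zero j x hx)).congr_deriv ?_).hasDerivWithinAt
    ring
  have hmeas : ∀ j, MeasurableSet ((fun x => s.ε / (s.n j + x)) '' s.I) := fun j =>
    s.measurableSet_I.image_of_continuousOn_injOn
      (fun x hx => (hder j x hx).continuousWithinAt) (hinj j)
  have hdisj : Pairwise (Function.onFun Disjoint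
      fun j => (fun x => s.ε / (s.n j + x)) '' s.I) := by
    intro i j hij
    rw [Function.onFun, Set.disjoint_left]
    rintro _ ⟨x, hx, rfl⟩ ⟨y, hy, hxy⟩
    refine hij (s.index_unique i j x hx y hy ?_)
    have h1 := s.add_ne_zero i x hx
    have h2 := s.add_ne_zero j y hy
    have := s.ε_ne_zero
    simp only at hxy
    field_simp at hxy
    linarith
  have hunion : (⋃ j, (fun x => s.ε / (s.n j + x)) '' s.I) =ᵐ[volume] s.I := by
    refine Filter.EventuallyLE.antisymm ?_ ?_
    · refine LE.le.eventuallyLE (Set.iUnion_subset fun j => ?_)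
      rintro _ ⟨x, hx, rfl⟩
      exact s.mapsTo j x hx
    · have : ∀ᵐ y ∂(volume : Measure ℝ), y ∉ s.exceptional :=
        measure_eq_zero_iff_ae_notMem.1 (s.countable_exceptional.measure_zero volume)
      filter_upwards [this] with y hy hyI
      obtain ⟨j, x, hx, h⟩ := s.exists_branch y hyI hy
      exact Set.mem_iUnion.2 ⟨j, x, hx, h⟩
  rw [lintegral_tsum fun j => by fun_prop]
  calc ∑' j, ∫⁻ x, ENNReal.ofReal (1 / (s.n j + x) ^ 2) * g (s.ε / (s.n j + x)) ∂s.μ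
      = ∑' j, ∫⁻ y in (fun x => s.ε / (s.n j + x)) '' s.I, g y := by
        refine tsum_congr fun j => ?_
        rw [lintegral_image_eq_lintegral_abs_deriv_mul s.measurableSet_I (hder j) (hinj j)]
        refine lintegral_congr fun x => ?_
        rw [abs_div, abs_neg, s.abs_ε, abs_of_nonneg (sq_nonneg _)]
    _ = ∫⁻ y in ⋃ j, (fun x => s.ε / (s.n j + x)) '' s.I, g y :=
        (lintegral_iUnion hmeas hdisj g).symm
    _ = ∫⁻ x, g x ∂s.μ := setLIntegral_congr hunion

theorem ae_branch {p : ℝ → Prop} (hp : ∀ᵐ x ∂s.μ, p x) :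
    ∀ᵐ x ∂s.μ, ∀ j, p (s.ε / (s.n j + x)) := by
  obtain ⟨t, hpt, ht, ht0⟩ := exists_measurable_superset_of_null (ae_iff.1 hp)
  have h := s.lintegral_transfer (measurable_one.indicator ht : Measurable (t.indicator 1))
  rw [lintegral_indicator_one ht, ht0, lintegral_eq_zero_iff
    (Measurable.tsum fun j => by
      refine Measurable.mul (by fun_prop) ?_
      exact (measurable_one.indicator ht).comp (by fun_prop))] at h
  filter_upwards [h, s.ae_mem] with x hx hxI j
  by_contra hj
  have h1 := (ENNReal.tsum_eq_zero.1 hx) j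
  have h2 : s.ε / (s.n j + x) ∈ t := hpt hj
  have h3 : 0 < 1 / (s.n j + x) ^ 2 := by
    have := s.add_ne_zero j x hxI
    positivity
  simp [h2] at h1
  exact s.add_ne_zero j x hxI h1

section

variable {F : Type*} [NormedAddCommGroup F] [NormedSpace ℝ F] {f g : ℝ → F}

theorem enorm_branch (j : J) (f : ℝ → F) (x : ℝ) :
    ‖s.branch j f x‖ₑ = ENNReal.ofReal (1 / (s.n j + x) ^ 2) * ‖f (s.ε / (s.n j + x))‖ₑ := by
  rw [branch, enorm_smul, Real.enorm_eq_ofReal (by positivity)]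

theorem ae_branch_congr (h : f =ᵐ[s.μ] g) : ∀ᵐ x ∂s.μ, ∀ j, s.branch j f x = s.branch j g x := by
  filter_upwards [s.ae_branch h] with x hx j
  rw [branch, branch, hx j]

theorem transfer_congr (h : f =ᵐ[s.μ] g) : s.transfer f =ᵐ[s.μ] s.transfer g := by
  filter_upwards [s.ae_branch_congr h] with x hx
  exact tsum_congr hx

theorem aestronglyMeasurable_branch (hf : AEStronglyMeasurable f s.μ) (j : J) :
    AEStronglyMeasurable (s.branch j f) s.μ := by
  have h : s.branch j f =ᵐ[s.μ] s.branch j (hf.mk f) := by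
    filter_upwards [s.ae_branch_congr hf.ae_eq_mk] with x hx using hx j
  refine AEStronglyMeasurable.congr ?_ h.symm
  have h1 : StronglyMeasurable fun x => (1 / (s.n j + x) ^ 2 : ℝ) :=
    (by fun_prop : Measurable fun x => (1 / (s.n j + x) ^ 2 : ℝ)).stronglyMeasurable
  exact (h1.smul (hf.stronglyMeasurable_mk.comp_measurable (by fun_prop))).aestronglyMeasurable

theorem lintegral_tsum_enorm_branch (hf : AEStronglyMeasurable f s.μ) :
    ∫⁻ x, ∑' j, ‖s.branch j f x‖ₑ ∂s.μ = ∫⁻ x, ‖f x‖ₑ ∂s.μ := by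
  have h : ∫⁻ x, ‖f x‖ₑ ∂s.μ = ∫⁻ x, ‖hf.mk f x‖ₑ ∂s.μ := by
    refine lintegral_congr_ae ?_
    filter_upwards [hf.ae_eq_mk] with x hx
    rw [hx]
  rw [h, ← s.lintegral_transfer (g := fun x => ‖hf.mk f x‖ₑ)
      hf.stronglyMeasurable_mk.enorm]
  refine lintegral_congr_ae ?_
  filter_upwards [s.ae_branch_congr hf.ae_eq_mk] with x hx
  refine tsum_congr fun j => ?_
  rw [hx j, enorm_branch]

theorem integrable_branch (hf : Integrable f s.μ) (j : J) : Integrable (s.branch j f) s.μ := by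
  refine ⟨s.aestronglyMeasurable_branch hf.1 j, ?_⟩
  refine lt_of_le_of_lt ?_ (s.lintegral_tsum_enorm_branch hf.1 ▸ hf.2 :
    ∫⁻ x, ∑' j, ‖s.branch j f x‖ₑ ∂s.μ < ⊤)
  exact lintegral_mono fun x => ENNReal.le_tsum j

theorem ae_summable_norm (hf : Integrable f s.μ) :
    ∀ᵐ x ∂s.μ, Summable fun j => ‖s.branch j f x‖ := by
  have h : ∫⁻ x, ∑' j, ‖s.branch j f x‖ₑ ∂s.μ ≠ ⊤ :=
    (s.lintegral_tsum_enorm_branch hf.1 ▸ hf.2 : _ < _).ne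
  have h' := ae_lt_top' (AEMeasurable.tsum fun j =>
    (s.aestronglyMeasurable_branch hf.1 j).enorm) h
  filter_upwards [h'] with x hx
  have := ENNReal.summable_toReal hx.ne
  simpa using this

theorem enorm_transfer_le (f : ℝ → F) (x : ℝ) :
    ‖s.transfer f x‖ₑ ≤ ∑' j, ‖s.branch j f x‖ₑ := enorm_tsum_le_tsum_enorm

theorem integrable_transfer [CompleteSpace F] (hf : Integrable f s.μ) :
    Integrable (s.transfer f) s.μ := by
  refine ⟨?_, ?_⟩
  · refine aestronglyMeasurable_of_tendsto_ae (ι := Finset J) atTop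
      (f := fun t x => ∑ j ∈ t, s.branch j f x) (fun t => ?_) ?_
    · exact Finset.aestronglyMeasurable_fun_sum _ fun j _ => s.aestronglyMeasurable_branch hf.1 j
    · filter_upwards [s.ae_summable_norm hf] with x hx using hx.of_norm.hasSum
  · refine lt_of_le_of_lt (lintegral_mono (s.enorm_transfer_le f)) ?_
    rw [s.lintegral_tsum_enorm_branch hf.1]
    exact hf.2

theorem integral_norm_transfer_le [CompleteSpace F] (hf : Integrable f s.μ) :
    ∫ x, ‖s.transfer f x‖ ∂s.μ ≤ ∫ x, ‖f x‖ ∂s.μ := by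
  rw [integral_norm_eq_lintegral_enorm (s.integrable_transfer hf).1,
    integral_norm_eq_lintegral_enorm hf.1]
  refine ENNReal.toReal_mono hf.2.ne ?_
  rw [← s.lintegral_tsum_enorm_branch hf.1]
  exact lintegral_mono (s.enorm_transfer_le f)

theorem branch_add (j : J) (f g : ℝ → F) (x : ℝ) :
    s.branch j (f + g) x = s.branch j f x + s.branch j g x := smul_add _ _ _

theorem transfer_add [CompleteSpace F] (hf : Integrable f s.μ) (hg : Integrable g s.μ) :
    s.transfer (f + g) =ᵐ[s.μ] s.transfer f + s.transfer g := by
  filter_upwards [s.ae_summable_norm hf, s.ae_summable_norm hg] with x h1 h2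
  simp only [transfer, branch_add, Pi.add_apply]
  exact h1.of_norm.tsum_add h2.of_norm

theorem transfer_smul (r : ℝ) (f : ℝ → F) : s.transfer (r • f) = r • s.transfer f := by
  ext x
  simp only [transfer, branch, Pi.smul_apply]
  rw [← tsum_const_smul'' r]
  exact tsum_congr fun j => smul_comm _ _ _

end

/-- The transfer operator on `L¹`. -/
noncomputable def transferL1 : Lp ℝ 1 s.μ →L[ℝ] Lp ℝ 1 s.μ :=
  LinearMap.mkContinuous
    { toFun := fun f => (s.integrable_transfer (L1.integrable_coeFn f)).toL1 _
      map_add' := fun f g => by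
        rw [← Integrable.toL1_add, Integrable.toL1_eq_toL1_iff]
        exact (s.transfer_congr (Lp.coeFn_add f g)).trans
          (s.transfer_add (L1.integrable_coeFn f) (L1.integrable_coeFn g))
      map_smul' := fun r f => by
        rw [RingHom.id_apply, ← Integrable.toL1_smul', Integrable.toL1_eq_toL1_iff]
        refine (s.transfer_congr (Lp.coeFn_smul r f)).trans ?_
        rw [s.transfer_smul] }
    1 fun f => by
      simp only [LinearMap.coe_mk, AddHom.coe_mk, one_mul]
      rw [L1.norm_eq_integral_norm, L1.norm_eq_integral_norm]
      refine le_trans (le_of_eq ?_) (s.integral_norm_transfer_le (L1.integrable_coeFn f))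
      exact integral_congr_ae ((Integrable.coeFn_toL1 _).fun_comp (‖·‖))

theorem coeFn_transferL1 {z : Lp ℝ 1 s.μ} {f : ℝ → ℝ} (h : z =ᵐ[s.μ] f) :
    s.transferL1 z =ᵐ[s.μ] s.transfer f :=
  (Integrable.coeFn_toL1 (s.integrable_transfer (L1.integrable_coeFn z))).trans
    (s.transfer_congr h)

theorem isMarkovOperator_transferL1 : IsMarkovOperator s.transferL1 := by
  have hnn : ∀ z : Lp ℝ 1 s.μ, 0 ≤ z → ∀ᵐ x ∂s.μ, ∀ j, 0 ≤ s.branch j z x := by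
    intro z hz
    filter_upwards [s.ae_branch ((Lp.coeFn_nonneg z).2 hz)] with x hx j
    exact mul_nonneg (by positivity) (hx j)
  refine ⟨fun x y hx hy => ?_, fun z hz => ?_, fun z hz => ?_⟩
  · rw [L1.norm_eq_integral_norm, L1.norm_eq_integral_norm, L1.norm_eq_integral_norm,
      ← integral_add (L1.integrable_coeFn x).norm (L1.integrable_coeFn y).norm]
    refine integral_congr_ae ?_
    filter_upwards [Lp.coeFn_add x y, (Lp.coeFn_nonneg x).2 hx, (Lp.coeFn_nonneg y).2 hy]
      with t h1 h2 h3
    simp only [Pi.zero_apply] at h2 h3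
    rw [h1, Pi.add_apply, Real.norm_of_nonneg h2, Real.norm_of_nonneg h3,
      Real.norm_of_nonneg (add_nonneg h2 h3)]
  · rw [← Lp.coeFn_nonneg]
    filter_upwards [s.coeFn_transferL1 (ae_eq_refl z), hnn z hz] with x h1 h2
    rw [h1]
    exact tsum_nonneg h2
  · rw [L1.norm_def, L1.norm_def,
      ← s.lintegral_tsum_enorm_branch (L1.integrable_coeFn z).1]
    congr 1
    refine lintegral_congr_ae ?_
    filter_upwards [s.coeFn_transferL1 (ae_eq_refl z), hnn z hz,
      s.ae_summable_norm (L1.integrable_coeFn z)] with x h1 h2 h3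
    rw [h1, transfer, Real.enorm_eq_ofReal (tsum_nonneg h2),
      ENNReal.ofReal_tsum_of_nonneg h2 h3.of_norm]
    exact tsum_congr fun j => (Real.enorm_eq_ofReal (h2 j)).symm

theorem exists_hasSum_transferL1 {z : Lp ℝ 1 s.μ} {f : ℝ → ℝ} (h : z =ᵐ[s.μ] f) :
    ∃ b : J → Lp ℝ 1 s.μ, (∀ j, b j =ᵐ[s.μ] s.branch j f) ∧ HasSum b (s.transferL1 z) := by
  have hf : Integrable f s.μ := (L1.integrable_coeFn z).congr h
  refine ⟨fun j => (s.integrable_branch hf j).toL1 _, fun j => Integrable.coeFn_toL1 _, ?_⟩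
  set b : J → Lp ℝ 1 s.μ := fun j => (s.integrable_branch hf j).toL1 _ with hb
  rw [HasSum, tendsto_iff_edist_tendsto_0]
  have htop : ∑' j, ∫⁻ x, ‖s.branch j f x‖ₑ ∂s.μ ≠ ⊤ := by
    rw [← lintegral_tsum fun j => (s.aestronglyMeasurable_branch hf.1 j).enorm,
      s.lintegral_tsum_enorm_branch hf.1]
    exact hf.2.ne
  refine tendsto_of_tendsto_of_tendsto_of_le_of_le tendsto_const_nhds
    (ENNReal.tendsto_tsum_compl_atTop_zero htop) (fun _ => bot_le) fun t => ?_
  have hsum : (∑ j ∈ t, b j : Lp ℝ 1 s.μ) =ᵐ[s.μ] fun x => ∑ j ∈ t, s.branch j f x := by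
    refine (Lp.coeFn_finsetSum t b).trans ?_
    have hall : ∀ᵐ x ∂s.μ, ∀ j, b j x = s.branch j f x :=
      ae_all_iff.2 fun j => Integrable.coeFn_toL1 _
    filter_upwards [hall] with x hx
    rw [Finset.sum_apply]
    exact Finset.sum_congr rfl fun j _ => hx j
  simp only
  rw [L1.edist_def, ← lintegral_tsum fun j : {j // j ∉ t} =>
    (s.aestronglyMeasurable_branch hf.1 j).enorm]
  refine lintegral_mono_ae ?_
  filter_upwards [hsum, s.coeFn_transferL1 h, s.ae_summable_norm hf] with x h1 h2 h3
  rw [h1, h2, edist_comm, edist_eq_enorm_sub, transfer,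
    ← h3.of_norm.sum_add_tsum_subtype_compl t, add_sub_cancel_left]
  exact enorm_tsum_le_tsum_enorm

end InversionSystem

end Transfer

section ClosedCone

variable {E : Type*} [NormedAddCommGroup E] [NormedSpace ℝ E]

/-- A closed convex cone containing the origin. -/
structure IsClosedCone (K : Set E) : Prop where
  zero_mem : (0 : E) ∈ K
  add_mem : ∀ x ∈ K, ∀ y ∈ K, x + y ∈ K
  smul_mem : ∀ r : ℝ, 0 ≤ r → ∀ x ∈ K, r • x ∈ K
  isClosed : IsClosed K

/-- The smallest closed convex cone containing a set. -/
def closedConeHull (G : Set E) : Set E := {z | ∀ K : Set E, IsClosedCone K → G ⊆ K → z ∈ K}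

theorem subset_closedConeHull (G : Set E) : G ⊆ closedConeHull G := fun _ hz _ _ hGK => hGK hz

theorem closedConeHull_subset {G K : Set E} (hK : IsClosedCone K) (h : G ⊆ K) :
    closedConeHull G ⊆ K := fun _ hz => hz K hK h

theorem isClosedCone_closedConeHull (G : Set E) : IsClosedCone (closedConeHull G) where
  zero_mem _ hK _ := hK.zero_mem
  add_mem x hx y hy K hK hG := hK.add_mem x (hx K hK hG) y (hy K hK hG)
  smul_mem r hr x hx K hK hG := hK.smul_mem r hr x (hx K hK hG)
  isClosed := by
    simp only [closedConeHull, Set.ofPred_forall]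
    exact isClosed_iInter fun K => isClosed_iInter fun hK => isClosed_iInter fun _ => hK.isClosed

namespace IsClosedCone

theorem preimage {K : Set E} (hK : IsClosedCone K) (T : E →L[ℝ] E) : IsClosedCone (T ⁻¹' K) where
  zero_mem := by
    rw [Set.mem_preimage, map_zero]
    exact hK.zero_mem
  add_mem x hx y hy := by
    rw [Set.mem_preimage, map_add]
    exact hK.add_mem _ hx _ hy
  smul_mem r hr x hx := by
    rw [Set.mem_preimage, map_smul]
    exact hK.smul_mem r hr _ hx
  isClosed := hK.isClosed.preimage T.continuous

theorem mem_of_hasSum {K : Set E} (hK : IsClosedCone K) {J : Type*} {b : J → E} {z : E}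
    (h : HasSum b z) (hb : ∀ j, b j ∈ K) : z ∈ K := by
  refine hK.isClosed.mem_of_tendsto h (Eventually.of_forall fun t => ?_)
  exact Finset.sum_induction b (· ∈ K) (fun x y hx hy => hK.add_mem x hx y hy) hK.zero_mem
    fun j _ => hb j

end IsClosedCone

variable [Lattice E] [HasSolidNorm E] [IsOrderedAddMonoid E] [PosSMulMono ℝ E]

theorem isClosedCone_nonneg : IsClosedCone {z : E | 0 ≤ z} where
  zero_mem := le_refl (0 : E)
  add_mem _ hx _ hy := add_nonneg hx hy
  smul_mem r hr x hx := by
    have := smul_le_smul_of_nonneg_left (show 0 ≤ x from hx) hr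
    rwa [smul_zero] at this
  isClosed := isClosed_nonneg

/-- The positive elements that are well approximated by elements of a closed cone. -/
theorem isClosedCone_approx {T : E →L[ℝ] E} (hT : IsMarkovOperator T) {C : Set E}
    (hC : IsClosedCone C) {θ : ℝ} (hθ : 0 ≤ θ) :
    IsClosedCone {z : E | 0 ≤ z ∧ ∀ δ > 0, ∃ g ∈ C, ‖z - g‖ ≤ θ * ‖z‖ + δ} where
  zero_mem := ⟨le_rfl, fun δ hδ => ⟨0, hC.zero_mem, by simpa using hδ.le⟩⟩
  add_mem := by
    rintro x ⟨hx, hx'⟩ y ⟨hy, hy'⟩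
    refine ⟨add_nonneg hx hy, fun δ hδ => ?_⟩
    obtain ⟨g, hg, h1⟩ := hx' (δ / 2) (by positivity)
    obtain ⟨g', hg', h2⟩ := hy' (δ / 2) (by positivity)
    refine ⟨g + g', hC.add_mem _ hg _ hg', ?_⟩
    rw [hT.norm_add x y hx hy, add_sub_add_comm]
    refine (norm_add_le _ _).trans ?_
    linarith
  smul_mem := by
    rintro r hr x ⟨hx, hx'⟩
    refine ⟨isClosedCone_nonneg.smul_mem r hr x hx, fun δ hδ => ?_⟩
    obtain ⟨g, hg, h1⟩ := hx' (δ / (r + 1)) (by positivity)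
    refine ⟨r • g, hC.smul_mem r hr g hg, ?_⟩
    rw [← smul_sub, norm_smul, norm_smul, Real.norm_of_nonneg hr]
    have h2 : r * (δ / (r + 1)) ≤ δ := by
      rw [mul_div_assoc', div_le_iff₀ (by positivity)]
      nlinarith
    have h3 := mul_le_mul_of_nonneg_left h1 hr
    nlinarith
  isClosed := by
    refine isClosed_of_closure_subset fun z hz => ⟨?_, fun δ hδ => ?_⟩
    · exact closure_minimal (fun z hz => hz.1) isClosed_nonneg hz
    · obtain ⟨z', ⟨-, hz'⟩, hd⟩ := Metric.mem_closure_iff.1 hz (δ / (2 * (1 + θ))) (by positivity)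
      obtain ⟨g, hg, h1⟩ := hz' (δ / 2) (by positivity)
      refine ⟨g, hg, ?_⟩
      rw [dist_eq_norm] at hd
      have h2 := norm_sub_le_norm_sub_add_norm_sub z z' g
      have h3 : ‖z'‖ ≤ ‖z‖ + ‖z - z'‖ := norm_le_norm_add_norm_sub z z'
      have h4 : ‖z - z'‖ * (1 + θ) ≤ δ / 2 := by
        have := mul_le_mul_of_nonneg_right hd.le (show 0 ≤ 1 + θ by positivity)
        refine this.trans (le_of_eq ?_)
        field_simp
      have h5 := mul_le_mul_of_nonneg_left h3 hθ
      nlinarith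

end ClosedCone

/-- An inversion system together with classes of denominators `c x + d` stable under composition
with the inverse branches, and graded classes along which the branches contract. -/
structure GradedInversionSystem (J : Type*) extends InversionSystem J where
  Good : ℝ → ℝ → Prop
  Adm : ℕ → ℝ → ℝ → Prop
  η : ℕ → ℝ
  good_step : ∀ j c d, Good c d → Good d (n j * d + ε * c)
  adm_zero : Adm 0 0 1
  adm_step : ∀ m j c d, Adm m c d → Adm (m + 1) d (n j * d + ε * c)
  good_of_adm : ∀ m c d, Adm m c d → Good c d
  good_ne_zero : ∀ c d, Good c d → ∀ x ∈ Set.Ioo lo hi, c * x + d ≠ 0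
  adm_ne_zero : ∀ m c d, Adm m c d → d ≠ 0
  adm_bound : ∀ m c d, Adm m c d → ∀ x ∈ Set.Ioo lo hi, |x| ≤ η m * |(c * x + d) * d|
  tendsto_η : Tendsto η atTop (𝓝 0)

namespace GradedInversionSystem

variable {J : Type*} [Countable J] (s : GradedInversionSystem J)

/-- The kernels `1 / (c x + d) ^ 2` as elements of `L¹`. -/
def kernels : Set (Lp ℝ 1 s.μ) :=
  {z | ∃ c d, s.Good c d ∧ z =ᵐ[s.μ] fun x => 1 / (c * x + d) ^ 2}

/-- The closed cone generated by the kernels. -/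
def kernelCone : Set (Lp ℝ 1 s.μ) := closedConeHull s.kernels

/-- The function `u ∘ ψ / (c x + d) ^ 2` for the fractional linear map
`ψ x = (a x + b) / (c x + d)`. -/
noncomputable def atom (u : ℝ → ℝ) (a b c d : ℝ) (x : ℝ) : ℝ :=
  u ((a * x + b) / (c * x + d)) / (c * x + d) ^ 2

/-- The closed cone generated by the images of `u` under compositions of inverse branches of a
given grade. -/
def atomCone (u : ℝ → ℝ) (m : ℕ) : Set (Lp ℝ 1 s.μ) :=
  closedConeHull {z | ∃ a b c d, (a * d - b * c) ^ 2 = 1 ∧ s.Adm m c d ∧ z =ᵐ[s.μ] atom u a b c d}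

theorem branch_kernel (j : J) (c d : ℝ) {x : ℝ} (hx : x ∈ s.I) :
    s.branch j (fun x => 1 / (c * x + d) ^ 2) x = 1 / (d * x + (s.n j * d + s.ε * c)) ^ 2 := by
  have h := s.add_ne_zero j x hx
  have : d * x + (s.n j * d + s.ε * c) = (s.n j + x) * (c * (s.ε / (s.n j + x)) + d) := by
    field_simp
    ring
  rw [this, mul_pow, InversionSystem.branch, smul_eq_mul, one_div_mul_one_div]

theorem branch_atom (u : ℝ → ℝ) (j : J) (a b c d : ℝ) {x : ℝ} (hx : x ∈ s.I) :
    s.branch j (atom u a b c d) x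
      = atom u b (s.n j * b + s.ε * a) d (s.n j * d + s.ε * c) x := by
  have h := s.add_ne_zero j x hx
  have h1 : ∀ c d : ℝ,
      d * x + (s.n j * d + s.ε * c) = (s.n j + x) * (c * (s.ε / (s.n j + x)) + d) := by
    intro c d
    field_simp
    ring
  rw [atom, h1, h1, mul_div_mul_left _ _ h, mul_pow, InversionSystem.branch, smul_eq_mul, atom,
    div_mul_div_comm, one_mul]

theorem isClosedCone_kernelCone : IsClosedCone s.kernelCone := isClosedCone_closedConeHull _

theorem kernels_branch {c d : ℝ} (hcd : s.Good c d) {j : J} {b : Lp ℝ 1 s.μ}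
    (hb : b =ᵐ[s.μ] s.branch j fun x => 1 / (c * x + d) ^ 2) : b ∈ s.kernels := by
  refine ⟨d, s.n j * d + s.ε * c, s.good_step j c d hcd, ?_⟩
  filter_upwards [hb, s.ae_mem] with x h1 h2
  rw [h1, s.branch_kernel j c d h2]

theorem transferL1_mem_kernelCone : ∀ z ∈ s.kernelCone, s.transferL1 z ∈ s.kernelCone := by
  refine closedConeHull_subset (s.isClosedCone_kernelCone.preimage s.transferL1) ?_
  rintro z ⟨c, d, hcd, hz⟩
  obtain ⟨b, hb, hsum⟩ := s.exists_hasSum_transferL1 hz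
  exact s.isClosedCone_kernelCone.mem_of_hasSum hsum fun j =>
    subset_closedConeHull _ (s.kernels_branch hcd (hb j))

theorem nonneg_of_mem_kernelCone : ∀ z ∈ s.kernelCone, 0 ≤ z := by
  refine closedConeHull_subset isClosedCone_nonneg ?_
  rintro z ⟨c, d, -, hz⟩
  refine (Lp.coeFn_nonneg z).1 ?_
  filter_upwards [hz] with x hx
  rw [hx]
  simp only [Pi.zero_apply]
  positivity

theorem transferL1_mem_atomCone (u : ℝ → ℝ) (m : ℕ) :
    ∀ z ∈ s.atomCone u m, s.transferL1 z ∈ s.atomCone u (m + 1) := by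
  have hK : IsClosedCone (s.atomCone u (m + 1)) := isClosedCone_closedConeHull _
  refine closedConeHull_subset (hK.preimage s.transferL1) ?_
  rintro z ⟨a, b, c, d, hdet, hcd, hz⟩
  obtain ⟨w, hw, hsum⟩ := s.exists_hasSum_transferL1 hz
  refine hK.mem_of_hasSum hsum fun j => subset_closedConeHull _ ?_
  refine ⟨b, s.n j * b + s.ε * a, d, s.n j * d + s.ε * c, ?_, s.adm_step m j c d hcd, ?_⟩
  · linear_combination s.ε ^ 2 * hdet + s.sq_ε
  · filter_upwards [hw j, s.ae_mem] with x h1 h2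
    rw [h1, s.branch_atom u j a b c d h2]

theorem pow_transferL1_mem_atomCone {u : ℝ → ℝ} {z : Lp ℝ 1 s.μ} (hz : z =ᵐ[s.μ] u) (m : ℕ) :
    (s.transferL1 ^ m) z ∈ s.atomCone u m := by
  induction m with
  | zero =>
    refine subset_closedConeHull _ ⟨1, 0, 0, 1, by norm_num, s.adm_zero, ?_⟩
    filter_upwards [hz] with x hx
    simp [atom, hx]
  | succ m ih =>
    rw [pow_succ']
    exact s.transferL1_mem_atomCone u m _ ih

theorem approx_of_mem_atomCone {u : ℝ → ℝ} {m : ℕ} {δ₀ ω : ℝ} (hδ₀ : 0 < δ₀) (hu : ∀ x, δ₀ ≤ u x)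
    (hω : 0 ≤ ω) (huω : ∀ x y, |x - y| ≤ s.η m → |u x - u y| ≤ ω) :
    ∀ z ∈ s.atomCone u m, 0 ≤ z ∧
      ∀ δ > 0, ∃ g ∈ s.kernelCone, ‖z - g‖ ≤ ω / δ₀ * ‖z‖ + δ := by
  refine closedConeHull_subset (isClosedCone_approx s.isMarkovOperator_transferL1
    s.isClosedCone_kernelCone (by positivity : 0 ≤ ω / δ₀)) ?_
  rintro z ⟨a, b, c, d, hdet, hcd, hz⟩
  have hd := s.adm_ne_zero m c d hcd
  have hkz : ∀ᵐ x ∂s.μ, 1 / (c * x + d) ^ 2 ≤ δ₀⁻¹ * z x := by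
    filter_upwards [hz] with x hx
    rw [hx, atom, mul_div_assoc']
    refine div_le_div_of_nonneg_right ?_ (sq_nonneg _)
    rw [inv_mul_eq_div, one_le_div hδ₀]
    exact hu _
  have hkint : Integrable (fun x => 1 / (c * x + d) ^ 2) s.μ := by
    refine ((L1.integrable_coeFn z).const_mul δ₀⁻¹).mono'
      (by fun_prop : Measurable fun x : ℝ => 1 / (c * x + d) ^ 2).aestronglyMeasurable ?_
    filter_upwards [hkz] with x hx
    rwa [Real.norm_of_nonneg (by positivity)]
  have hz0 : 0 ≤ᵐ[s.μ] z := by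
    filter_upwards [hz] with x hx
    rw [hx]
    exact div_nonneg (hδ₀.le.trans (hu _)) (sq_nonneg _)
  refine ⟨(Lp.coeFn_nonneg z).1 hz0, fun δ hδ => ?_⟩
  refine ⟨u (b / d) • hkint.toL1 _, s.isClosedCone_kernelCone.smul_mem _ (hδ₀.le.trans (hu _)) _
    (subset_closedConeHull _ ⟨c, d, s.good_of_adm m c d hcd, hkint.coeFn_toL1⟩), ?_⟩
  suffices h : ‖z - u (b / d) • hkint.toL1 _‖ ≤ ω / δ₀ * ‖z‖ by linarith
  rw [L1.norm_eq_integral_norm, L1.norm_eq_integral_norm, ← integral_const_mul]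
  refine integral_mono_ae (L1.integrable_coeFn _).norm ((L1.integrable_coeFn z).norm.const_mul _) ?_
  filter_upwards [Lp.coeFn_sub z (u (b / d) • hkint.toL1 _), hkz, hz, hz0,
    Lp.coeFn_smul (u (b / d)) (hkint.toL1 _), hkint.coeFn_toL1, s.ae_mem]
    with x h1 h2 h3 h4 h5 h6 h7
  simp only [Pi.zero_apply] at h4
  rw [h1, Pi.sub_apply, h5, Pi.smul_apply, h6, Real.norm_of_nonneg h4, h3, atom, smul_eq_mul,
    div_eq_mul_one_div, ← sub_mul, norm_mul, Real.norm_eq_abs, Real.norm_of_nonneg (by positivity)]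
  have hne := s.good_ne_zero c d (s.good_of_adm m c d hcd) x h7
  have hdist : |(a * x + b) / (c * x + d) - b / d| ≤ s.η m := by
    have : (a * x + b) / (c * x + d) - b / d = (a * d - b * c) * x / ((c * x + d) * d) := by
      rw [div_sub_div _ _ hne hd]
      congr 1
      ring
    have hdet' : |a * d - b * c| = 1 := by
      rwa [← sq_abs, pow_eq_one_iff_of_nonneg (abs_nonneg _) two_ne_zero] at hdet
    rw [this, abs_div, abs_mul, hdet', one_mul, div_le_iff₀ (abs_pos.2 (mul_ne_zero hne hd))]
    exact s.adm_bound m c d hcd x h7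
  calc |u ((a * x + b) / (c * x + d)) - u (b / d)| * (1 / (c * x + d) ^ 2)
      ≤ ω * (δ₀⁻¹ * z x) := mul_le_mul (huω _ _ hdist) h2 (by positivity) hω
    _ = ω / δ₀ * (u ((a * x + b) / (c * x + d)) * (1 / (c * x + d) ^ 2)) := by
      rw [h3, atom]
      ring

theorem absorbs_of_uniformContinuous {u : ℝ → ℝ} (hu : UniformContinuous u) {δ₀ : ℝ}
    (hδ₀ : 0 < δ₀) (hu0 : ∀ x, δ₀ ≤ u x) {z : Lp ℝ 1 s.μ} (hz : z =ᵐ[s.μ] u) {δ : ℝ}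
    (hδ : 0 < δ) : ∃ m : ℕ, ∃ g ∈ s.kernelCone, ‖(s.transferL1 ^ m) z - g‖ ≤ δ := by
  set ω := δ₀ * (δ / (2 * (‖z‖ + 1))) with hωdef
  have hω : 0 < ω := by positivity
  obtain ⟨ρ, hρ, hρω⟩ := Metric.uniformContinuous_iff.1 hu ω hω
  obtain ⟨m, hm⟩ := (s.tendsto_η.eventually (gt_mem_nhds hρ)).exists
  obtain ⟨-, h⟩ := s.approx_of_mem_atomCone hδ₀ hu0 hω.le
    (fun x y hxy => (hρω (show dist x y < ρ from hxy.trans_lt hm)).le) _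
    (s.pow_transferL1_mem_atomCone hz m)
  obtain ⟨g, hg, hzg⟩ := h (δ / 2) (by positivity)
  refine ⟨m, g, hg, hzg.trans ?_⟩
  have h1 := s.isMarkovOperator_transferL1.norm_pow_le m z
  have h2 : ω / δ₀ = δ / (2 * (‖z‖ + 1)) := by
    rw [hωdef]
    field_simp
  have h3 : δ / (2 * (‖z‖ + 1)) * ‖z‖ ≤ δ / 2 := by
    rw [div_mul_eq_mul_div, div_le_div_iff₀ (by positivity) (by positivity)]
    nlinarith [norm_nonneg z]
  rw [h2]
  have h4 := mul_le_mul_of_nonneg_left h1 (show 0 ≤ δ / (2 * (‖z‖ + 1)) by positivity)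
  linarith

/-- Every positive orbit of the transfer operator is absorbed by the cone of kernels. -/
theorem absorbs (z : Lp ℝ 1 s.μ) (hz : 0 ≤ z) (δ : ℝ) (hδ : 0 < δ) :
    ∃ m : ℕ, ∃ g ∈ s.kernelCone, ‖(s.transferL1 ^ m) z - g‖ ≤ δ := by
  obtain ⟨f, hfs, hfz, hfc, hfi⟩ := (L1.integrable_coeFn z).exists_hasCompactSupport_integral_sub_le
    (show 0 < δ / 4 by positivity)
  set V := s.μ.real Set.univ with hV
  have hV0 : 0 ≤ V := measureReal_nonneg
  set δ₀ := δ / (4 * (V + 1)) with hδ₀def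
  have hδ₀ : 0 < δ₀ := by positivity
  have hVδ : V * δ₀ ≤ δ / 4 := by
    rw [hδ₀def, mul_div_assoc', div_le_div_iff₀ (by positivity) (by positivity)]
    nlinarith
  set u : ℝ → ℝ := fun x => max (f x) 0 + δ₀ with hu
  have huc : UniformContinuous u := by
    have h1 : LipschitzWith 1 fun y : ℝ => max y 0 := LipschitzWith.id.max_const 0
    have h2 := h1.uniformContinuous.comp (hfs.uniformContinuous_of_continuous hfc)
    exact h2.add uniformContinuous_const
  have hui : Integrable u s.μ := (hfi.sup (integrable_zero _ _ _)).add (integrable_const _)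
  obtain ⟨m, g, hg, h⟩ := s.absorbs_of_uniformContinuous huc hδ₀
    (fun x => by simp only [hu]; linarith [le_max_right (f x) 0]) hui.coeFn_toL1
    (show 0 < δ / 2 by positivity)
  refine ⟨m, g, hg, ?_⟩
  have h1 : ‖z - hui.toL1 u‖ ≤ δ / 2 := by
    rw [L1.norm_eq_integral_norm]
    have hsub : Integrable (fun x => ‖z x - f x‖) s.μ := ((L1.integrable_coeFn z).sub hfi).norm
    have : ∫ x, ‖(z - hui.toL1 u : Lp ℝ 1 s.μ) x‖ ∂s.μ ≤ ∫ x, (‖z x - f x‖ + δ₀) ∂s.μ := by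
      refine integral_mono_ae (L1.integrable_coeFn _).norm
        (hsub.add (integrable_const _)) ?_
      filter_upwards [Lp.coeFn_sub z (hui.toL1 u), hui.coeFn_toL1, (Lp.coeFn_nonneg z).2 hz]
        with x h1 h2 h3
      simp only [Pi.zero_apply] at h3
      rw [h1, Pi.sub_apply, h2]
      refine (norm_sub_le_norm_sub_add_norm_sub _ (max (f x) 0) _).trans ?_
      have h4 : ‖z x - max (f x) 0‖ ≤ ‖z x - f x‖ := by
        have := abs_max_sub_max_le_abs (z x) (f x) 0
        rwa [max_eq_left h3] at this
      have h5 : ‖max (f x) 0 - (max (f x) 0 + δ₀)‖ = δ₀ := by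
        rw [sub_add_cancel_left, norm_neg, Real.norm_of_nonneg hδ₀.le]
      linarith
    refine this.trans ?_
    rw [integral_add hsub (integrable_const _), integral_const,
      smul_eq_mul]
    linarith
  have h2 := s.isMarkovOperator_transferL1.norm_pow_le m (z - hui.toL1 u)
  rw [map_sub] at h2
  have h3 := norm_sub_le_norm_sub_add_norm_sub ((s.transferL1 ^ m) z)
    ((s.transferL1 ^ m) (hui.toL1 u)) g
  linarith

end GradedInversionSystem

section ClosedConeExamples

variable {E : Type*} [NormedAddCommGroup E] [NormedSpace ℝ E] [Lattice E] [HasSolidNorm E]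
  [IsOrderedAddMonoid E] [PosSMulMono ℝ E] {T : E →L[ℝ] E}

theorem isClosedCone_norm_smul_le (hT : IsMarkovOperator T) (e : E) :
    IsClosedCone {g : E | 0 ≤ g ∧ ‖g‖ • e ≤ g} where
  zero_mem := by
    show (0 : E) ≤ 0 ∧ ‖(0 : E)‖ • e ≤ 0
    simp
  add_mem := by
    rintro x ⟨hx, hx'⟩ y ⟨hy, hy'⟩
    refine ⟨add_nonneg hx hy, ?_⟩
    rw [hT.norm_add x y hx hy, add_smul]
    exact add_le_add hx' hy'
  smul_mem := by
    rintro r hr x ⟨hx, hx'⟩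
    refine ⟨isClosedCone_nonneg.smul_mem r hr x hx, ?_⟩
    rw [norm_smul, Real.norm_of_nonneg hr, mul_smul]
    exact smul_le_smul_of_nonneg_left hx' hr
  isClosed := isClosed_nonneg.inter
    (isClosed_le (continuous_norm.smul continuous_const) continuous_id)

theorem isClosedCone_le_smul_map (T : E →L[ℝ] E) (A : ℝ) :
    IsClosedCone {g : E | g ≤ A • T g} where
  zero_mem := by
    show (0 : E) ≤ A • T 0
    simp
  add_mem x hx y hy := by
    show x + y ≤ A • T (x + y)
    rw [map_add, smul_add]
    exact add_le_add hx hy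
  smul_mem r hr x hx := by
    show r • x ≤ A • T (r • x)
    rw [map_smul, smul_comm]
    exact smul_le_smul_of_nonneg_left hx hr
  isClosed := isClosed_le continuous_id (T.continuous.const_smul A)

theorem isClosedCone_asymptoticNorm_le (hT : IsMarkovOperator T) (p : E) (M : ℝ) :
    IsClosedCone {g : E | 0 ≤ g ∧ asymptoticNorm T (g - ‖g‖ • p) ≤ M * ‖g‖} where
  zero_mem := by
    show (0 : E) ≤ 0 ∧ asymptoticNorm T (0 - ‖(0 : E)‖ • p) ≤ M * ‖(0 : E)‖
    refine ⟨le_rfl, (IsMarkovOperator.asymptoticNorm_le_norm T _).trans ?_⟩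
    simp
  add_mem := by
    rintro x ⟨hx, hx'⟩ y ⟨hy, hy'⟩
    refine ⟨add_nonneg hx hy, ?_⟩
    rw [hT.norm_add x y hx hy, add_smul, add_sub_add_comm]
    refine (hT.asymptoticNorm_add_le _ _).trans ?_
    linarith
  smul_mem := by
    rintro r hr x ⟨hx, hx'⟩
    refine ⟨isClosedCone_nonneg.smul_mem r hr x hx, ?_⟩
    rw [norm_smul, Real.norm_of_nonneg hr, mul_smul, ← smul_sub, hT.asymptoticNorm_smul,
      abs_of_nonneg hr, mul_left_comm]
    exact mul_le_mul_of_nonneg_left hx' hr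
  isClosed := isClosed_nonneg.inter (isClosed_le (hT.continuous_asymptoticNorm.comp
    (continuous_id.sub (continuous_norm.smul continuous_const)))
    (continuous_const.mul continuous_norm))

end ClosedConeExamples

namespace InversionSystem

variable {J : Type*} [Countable J] (s : InversionSystem J)

theorem norm_eq_integral {z : Lp ℝ 1 s.μ} (hz : 0 ≤ z) : ‖z‖ = ∫ x, z x ∂s.μ := by
  rw [L1.norm_eq_integral_norm]
  refine integral_congr_ae ?_
  filter_upwards [(Lp.coeFn_nonneg z).2 hz] with x hx
  exact Real.norm_of_nonneg hx

theorem integral_eq_norm_posPart_sub (z : Lp ℝ 1 s.μ) : ∫ x, z x ∂s.μ = ‖z⁺‖ - ‖z⁻‖ := by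
  rw [s.norm_eq_integral (posPart_nonneg z), s.norm_eq_integral (negPart_nonneg z),
    ← integral_sub (L1.integrable_coeFn _) (L1.integrable_coeFn _)]
  refine integral_congr_ae ?_
  have h := Lp.coeFn_sub z⁺ z⁻
  rw [posPart_sub_negPart] at h
  exact h

section

variable {F : Type*} [NormedAddCommGroup F] [NormedSpace ℝ F] [CompleteSpace F] {f : ℝ → F}

theorem transfer_comp_clm (φ : F →L[ℝ] ℝ) (hf : Integrable f s.μ) :
    s.transfer (fun x => φ (f x)) =ᵐ[s.μ] fun x => φ (s.transfer f x) := by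
  filter_upwards [s.ae_summable_norm hf] with x hx
  rw [transfer, transfer, φ.map_tsum hx.of_norm]
  exact tsum_congr fun j => (φ.map_smul _ _).symm

theorem integrable_iterate_transfer (hf : Integrable f s.μ) (n : ℕ) :
    Integrable (s.transfer^[n] f) s.μ := by
  induction n with
  | zero => exact hf
  | succ n ih =>
    rw [Function.iterate_succ_apply']
    exact s.integrable_transfer ih

theorem coeFn_pow_transferL1 (φ : F →L[ℝ] ℝ) (hf : Integrable f s.μ) (n : ℕ) :
    (s.transferL1 ^ n) ((φ.integrable_comp hf).toL1 _)
      =ᵐ[s.μ] fun x => φ (s.transfer^[n] f x) := by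
  induction n with
  | zero => exact (φ.integrable_comp hf).coeFn_toL1
  | succ n ih =>
    rw [pow_succ', Function.iterate_succ_apply']
    exact (s.coeFn_transferL1 ih).trans
      (s.transfer_comp_clm φ (s.integrable_iterate_transfer hf n))

end

theorem tendsto_integral_norm_iterate {f : ℝ → ℂ} (hf : Integrable f s.μ)
    (hf0 : ∫ x, f x ∂s.μ = 0)
    (hs : ∀ z : Lp ℝ 1 s.μ, ‖z⁺‖ = ‖z⁻‖ → asymptoticNorm s.transferL1 z = 0) :
    Tendsto (fun n : ℕ => ∫ x, ‖s.transfer^[n] f x‖ ∂s.μ) atTop (𝓝 0) := by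
  have key : ∀ φ : ℂ →L[ℝ] ℝ,
      Tendsto (fun n : ℕ => ∫ x, ‖φ (s.transfer^[n] f x)‖ ∂s.μ) atTop (𝓝 0) := by
    intro φ
    have hz : ‖((φ.integrable_comp hf).toL1 _)⁺‖ = ‖((φ.integrable_comp hf).toL1 _)⁻‖ := by
      rw [← sub_eq_zero, ← integral_eq_norm_posPart_sub,
        integral_congr_ae (φ.integrable_comp hf).coeFn_toL1]
      rw [φ.integral_comp_comm hf, hf0, map_zero]
    have h := s.isMarkovOperator_transferL1.tendsto_asymptoticNorm
      ((φ.integrable_comp hf).toL1 _)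
    rw [hs _ hz] at h
    refine h.congr fun n => ?_
    rw [L1.norm_eq_integral_norm]
    refine integral_congr_ae ?_
    filter_upwards [s.coeFn_pow_transferL1 φ hf n] with x hx
    rw [hx]
  have hadd := (key Complex.reCLM).add (key Complex.imCLM)
  rw [add_zero] at hadd
  refine squeeze_zero (fun n => integral_nonneg fun x => norm_nonneg _) (fun n => ?_) hadd
  have hi := s.integrable_iterate_transfer hf n
  rw [← integral_add (Complex.reCLM.integrable_comp hi).norm (Complex.imCLM.integrable_comp hi).norm]
  refine integral_mono hi.norm ((Complex.reCLM.integrable_comp hi).norm.add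
    (Complex.imCLM.integrable_comp hi).norm) fun x => ?_
  exact Complex.norm_le_abs_re_add_abs_im _

end InversionSystem

/-- The inverse branches `x ↦ 1 / (j + 1 + x)` of the Gauss map on `(0, 1)`. -/
noncomputable def gaussSystem : GradedInversionSystem ℕ where
  n j := j + 1
  ε := 1
  lo := 0
  hi := 1
  exceptional := Set.range fun k : ℕ => 1 / (k : ℝ)
  sq_ε := one_pow 2
  add_ne_zero j x hx := by
    have := hx.1
    positivity
  mapsTo j x hx := by
    have h0 := hx.1
    refine ⟨by positivity, ?_⟩
    rw [div_lt_one (by positivity)]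
    have : (0 : ℝ) ≤ j := j.cast_nonneg
    linarith
  index_unique i j x hx y hy h := by
    obtain ⟨h1, h2⟩ := hx
    obtain ⟨h3, h4⟩ := hy
    have h5 : (i : ℝ) < j + 1 := by linarith
    have h6 : (j : ℝ) < i + 1 := by linarith
    have h7 : i < j + 1 := by exact_mod_cast h5
    have h8 : j < i + 1 := by exact_mod_cast h6
    omega
  countable_exceptional := Set.countable_range _
  exists_branch y hy hyE := by
    obtain ⟨h0, h1⟩ := hy
    have hinv : 1 < 1 / y := by rwa [one_lt_div h0]
    have hfl : ((⌊1 / y⌋₊ : ℕ) : ℝ) ≤ 1 / y := Nat.floor_le (by positivity)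
    have hfl' := Nat.lt_floor_add_one (1 / y)
    have hpos : 1 ≤ ⌊1 / y⌋₊ := Nat.le_floor (by exact_mod_cast hinv.le)
    obtain ⟨k, hk⟩ := Nat.exists_eq_add_of_le' hpos
    rw [hk] at hfl hfl'
    push_cast at hfl hfl'
    refine ⟨k, 1 / y - (k + 1), ⟨?_, by linarith⟩, ?_⟩
    · refine lt_of_le_of_ne (by linarith) fun h => hyE ⟨k + 1, ?_⟩
      push_cast
      rw [show (k : ℝ) + 1 = 1 / y by linarith, one_div_one_div]
    · rw [add_sub_cancel, one_div_one_div]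
  Good c d := 0 ≤ c ∧ c ≤ d ∧ 0 < d
  Adm m c d := 0 ≤ c ∧ c ≤ d ∧ 1 ≤ d ∧ m + 1 ≤ c + d
  η m := 2 / (m + 1)
  good_step j c d h := by
    obtain ⟨h1, h2, h3⟩ := h
    have : 0 ≤ (j : ℝ) * d := by positivity
    exact ⟨h3.le, by linarith, by linarith⟩
  adm_zero := by norm_num
  adm_step m j c d h := by
    obtain ⟨h1, h2, h3, h4⟩ := h
    have : 0 ≤ (j : ℝ) * d := by positivity
    push_cast
    exact ⟨by linarith, by linarith, by linarith, by linarith⟩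
  good_of_adm m c d h := ⟨h.1, h.2.1, by linarith [h.2.2.1]⟩
  good_ne_zero c d h x hx := by
    obtain ⟨h1, h2, h3⟩ := h
    have := hx.1
    positivity
  adm_ne_zero m c d h := by linarith [h.2.2.1]
  adm_bound m c d h x hx := by
    obtain ⟨h1, h2, h3, h4⟩ := h
    obtain ⟨h5, h6⟩ := hx
    have h7 : 0 ≤ c * x := by positivity
    rw [abs_of_pos h5, abs_of_nonneg (by positivity), div_mul_eq_mul_div, le_div_iff₀ (by positivity)]
    nlinarith
  tendsto_η := by
    have := (tendsto_one_div_add_atTop_nhds_zero_nat (𝕜 := ℝ)).const_mul 2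
    simpa only [mul_one_div, mul_zero] using this

theorem gaussSystem_lower_bound (e : Lp ℝ 1 gaussSystem.μ) (he : e =ᵐ[gaussSystem.μ] fun _ => 1 / 4) :
    ∀ g ∈ gaussSystem.kernelCone, ‖g‖ • e ≤ g := by
  suffices h : gaussSystem.kernelCone ⊆ {g : Lp ℝ 1 gaussSystem.μ | 0 ≤ g ∧ ‖g‖ • e ≤ g} from
    fun g hg => (h hg).2
  refine closedConeHull_subset
    (isClosedCone_norm_smul_le gaussSystem.isMarkovOperator_transferL1 e) ?_
  rintro z ⟨c, d, ⟨h1, h2, h3⟩, hz⟩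
  have hz0 := gaussSystem.nonneg_of_mem_kernelCone z
    (subset_closedConeHull _ ⟨c, d, ⟨h1, h2, h3⟩, hz⟩)
  refine ⟨hz0, ?_⟩
  have hnorm : ‖z‖ ≤ 1 / d ^ 2 := by
    rw [gaussSystem.norm_eq_integral hz0]
    have : ∫ x, z x ∂gaussSystem.μ ≤ ∫ x, 1 / d ^ 2 ∂gaussSystem.μ := by
      refine integral_mono_ae (L1.integrable_coeFn z) (integrable_const _) ?_
      filter_upwards [hz, gaussSystem.ae_mem] with x hx hxI
      rw [hx]
      have : 0 ≤ c * x := mul_nonneg h1 hxI.1.le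
      refine one_div_le_one_div_of_le (by positivity) ?_
      exact pow_le_pow_left₀ h3.le (by linarith) 2
    refine this.trans (le_of_eq ?_)
    simp [InversionSystem.μ, InversionSystem.I, gaussSystem, Measure.real]
  rw [← Lp.coeFn_le]
  filter_upwards [hz, he, Lp.coeFn_smul ‖z‖ e, gaussSystem.ae_mem] with x hx h4 h5 hxI
  have hxI1 : x < 1 := hxI.2
  have hxI0 : 0 < x := hxI.1
  rw [h5, Pi.smul_apply, h4, hx, smul_eq_mul]
  have h6 : c * x + d ≤ 2 * d := by nlinarith
  have h7 : 0 < c * x + d := by positivity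
  calc ‖z‖ * (1 / 4) ≤ 1 / d ^ 2 * (1 / 4) := by gcongr
    _ = 1 / (2 * d) ^ 2 := by
      field_simp
      norm_num
    _ ≤ 1 / (c * x + d) ^ 2 :=
      one_div_le_one_div_of_le (by positivity) (pow_le_pow_left₀ h7.le h6 2)

theorem gaussSystem_asymptoticNorm (z : Lp ℝ 1 gaussSystem.μ) (hz : ‖z⁺‖ = ‖z⁻‖) :
    asymptoticNorm gaussSystem.transferL1 z = 0 := by
  have hconst : Integrable (fun _ : ℝ => (1 / 4 : ℝ)) gaussSystem.μ := integrable_const _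
  have he0 : 0 ≤ hconst.toL1 _ := by
    rw [← Lp.coeFn_nonneg]
    filter_upwards [hconst.coeFn_toL1] with x hx
    rw [hx]
    norm_num
  refine gaussSystem.isMarkovOperator_transferL1.asymptoticNorm_eq_zero_of_lower_bound
    gaussSystem.transferL1_mem_kernelCone gaussSystem.absorbs (e := hconst.toL1 _)
    (lt_of_le_of_ne he0 fun h => ?_) (gaussSystem_lower_bound _ hconst.coeFn_toL1) hz
  have h1 := gaussSystem.norm_eq_integral he0
  rw [← h, norm_zero, h, integral_congr_ae hconst.coeFn_toL1] at h1
  simp [InversionSystem.μ, InversionSystem.I, gaussSystem, Measure.real] at h1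

namespace IsMarkovOperator

variable {E : Type*} [NormedAddCommGroup E] [Lattice E] [HasSolidNorm E] [IsOrderedAddMonoid E]
  [NormedSpace ℝ E] {T : E →L[ℝ] E}

theorem asymptoticNorm_le_asymptoticNorm_pow (T : E →L[ℝ] E) (m : ℕ) (x : E) :
    asymptoticNorm T x ≤ asymptoticNorm T ((T ^ m) x) := by
  refine le_ciInf fun n => ?_
  rw [← mul_apply_eq_comp, ← pow_add]
  exact asymptoticNorm_le_norm_pow T _ x

/-- If all elements of an absorbing invariant set are asymptotic to multiples of a fixed one, then
the operator is asymptotically stable. -/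
theorem asymptoticNorm_eq_zero_of_asymptotic (hT : IsMarkovOperator T) {C : Set E}
    (hC : ∀ g ∈ C, T g ∈ C)
    (habs : ∀ u : E, 0 ≤ u → ∀ δ > 0, ∃ m : ℕ, ∃ g ∈ C, ‖(T ^ m) u - g‖ ≤ δ)
    {p : E} (hpC : p ∈ C) (hp0 : 0 ≤ p) (hp : ‖p‖ = 1)
    (hCp : ∀ g ∈ C, asymptoticNorm T (g - ‖g‖ • p) ≤ 0)
    {x : E} (hx : ‖x⁺‖ = ‖x⁻‖) : asymptoticNorm T x = 0 := by
  have key : ∀ z : E, 0 ≤ z → asymptoticNorm T (z - ‖z‖ • p) ≤ 0 := by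
    intro z hz
    refine le_of_forall_pos_le_add fun δ hδ => ?_
    rw [zero_add]
    obtain ⟨m, g, hg, hzg⟩ := habs z hz (δ / 2) (by positivity)
    have hpm : (T ^ m) p ∈ C := by
      clear hzg
      induction m with
      | zero => simpa using hpC
      | succ m ih => rw [pow_succ']; exact hC _ ih
    have h1 := hCp _ hpm
    rw [(hT.pow m).norm_map p hp0, hp, one_smul] at h1
    have h2 := (hT.asymptoticNorm_smul ‖z‖ ((T ^ m) p - p))
    have h3 : asymptoticNorm T ((T ^ m) p - p) = 0 := le_antisymm h1 (asymptoticNorm_nonneg T _)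
    rw [h3, mul_zero] at h2
    have hsplit : (T ^ m) (z - ‖z‖ • p) = ((T ^ m) z - g) + (g - ‖g‖ • p)
        + (‖g‖ - ‖z‖) • p - ‖z‖ • ((T ^ m) p - p) := by
      rw [map_sub, map_smul]
      module
    have h4 := asymptoticNorm_le_asymptoticNorm_pow T m (z - ‖z‖ • p)
    rw [hsplit] at h4
    have h5 := hT.asymptoticNorm_sub_le (((T ^ m) z - g) + (g - ‖g‖ • p)
        + (‖g‖ - ‖z‖) • p) (‖z‖ • ((T ^ m) p - p))
    have h6 := hT.asymptoticNorm_add_le (((T ^ m) z - g) + (g - ‖g‖ • p)) ((‖g‖ - ‖z‖) • p)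
    have h7 := hT.asymptoticNorm_add_le ((T ^ m) z - g) (g - ‖g‖ • p)
    have h8 := asymptoticNorm_le_norm T ((T ^ m) z - g)
    have h9 := asymptoticNorm_le_norm T ((‖g‖ - ‖z‖) • p)
    rw [norm_smul, hp, mul_one, Real.norm_eq_abs] at h9
    have h10 := abs_norm_sub_norm_le g ((T ^ m) z)
    rw [(hT.pow m).norm_map z hz, norm_sub_rev] at h10
    have h11 := hCp g hg
    linarith
  refine le_antisymm ?_ (asymptoticNorm_nonneg T x)
  have h1 := hT.asymptoticNorm_sub_le (x⁺ - ‖x⁺‖ • p) (x⁻ - ‖x⁻‖ • p)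
  rw [hx, sub_sub_sub_cancel_right, posPart_sub_negPart] at h1
  have h2 := key _ (posPart_nonneg x)
  rw [hx] at h2
  have h3 := key _ (negPart_nonneg x)
  linarith

end IsMarkovOperator

theorem IsClosedCone.sub_sum_mem_of_hasSum {E : Type*} [NormedAddCommGroup E] [NormedSpace ℝ E]
    {K : Set E} (hK : IsClosedCone K) {J : Type*} {b : J → E} {z : E} (h : HasSum b z)
    (hb : ∀ j, b j ∈ K) (t : Finset J) : z - ∑ j ∈ t, b j ∈ K :=
  hK.mem_of_hasSum ((Finset.hasSum_compl_iff t).2 (by simpa using h)) fun j => hb j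

/-- A lower bound for functions superharmonic along the parabolic orbit `t ↦ t + 1`. -/
theorem half_le_of_superharmonic {H : ℝ → ℝ} {β : ℝ} (hβ : 0 ≤ β) (hH : ∀ t ≥ 1, 0 ≤ H t)
    (hstep : ∀ t ≥ 1, (2 * t - 1) / (2 * t + 1) * H (t + 1) + β / t ≤ H t) :
    ∀ t ≥ 1, β / 2 ≤ H t := by
  intro t ht
  have hk : ∀ k : ℕ, H (t + k) / (2 * (t + k) - 1) + β / 2 * (1 / t - 1 / (t + k))
      ≤ H t / (2 * t - 1) := by
    intro k
    induction k with
    | zero => simp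
    | succ k ih =>
      refine le_trans ?_ ih
      have hr : (1 : ℝ) ≤ t + k := by
        have : (0 : ℝ) ≤ k := k.cast_nonneg
        linarith
      push_cast
      rw [← add_assoc t k 1]
      generalize t + (k : ℝ) = r at hr
      have h1 := hstep r hr
      have h2 : 0 < 2 * r - 1 := by linarith
      have h3 : 0 < 2 * r + 1 := by linarith
      have h4 := div_le_div_of_nonneg_right h1 h2.le
      have h5 : ((2 * r - 1) / (2 * r + 1) * H (r + 1) + β / r) / (2 * r - 1)
          = H (r + 1) / (2 * (r + 1) - 1) + β / (r * (2 * r - 1)) := by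
        rw [show 2 * (r + 1) - 1 = 2 * r + 1 by ring]
        field_simp
      rw [h5] at h4
      have h6 : β / 2 * (1 / r - 1 / (r + 1)) ≤ β / (r * (2 * r - 1)) := by
        have : β / 2 * (1 / r - 1 / (r + 1)) = β / (r * (2 * (r + 1))) := by
          field_simp
          ring
        rw [this]
        exact div_le_div_of_nonneg_left hβ (by positivity)
          (mul_le_mul_of_nonneg_left (by linarith) (by linarith))
      linarith
  have hlim : Tendsto (fun k : ℕ => β / 2 * (1 / t - 1 / (t + k))) atTop
      (𝓝 (β / 2 * (1 / t - 0))) := by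
    refine Tendsto.const_mul _ (Tendsto.sub tendsto_const_nhds ?_)
    refine Tendsto.div_atTop tendsto_const_nhds ?_
    exact tendsto_atTop_add_const_left _ _ tendsto_natCast_atTop_atTop
  have hle : β / 2 * (1 / t - 0) ≤ H t / (2 * t - 1) := by
    refine le_of_tendsto' hlim fun k => (le_trans ?_ (hk k))
    have hr : (1 : ℝ) ≤ t + k := by
      have : (0 : ℝ) ≤ k := k.cast_nonneg
      linarith
    have := div_nonneg (hH _ hr) (show 0 ≤ 2 * (t + k) - 1 by linarith)
    linarith
  rw [sub_zero, le_div_iff₀ (by linarith)] at hle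
  refine le_trans ?_ hle
  rw [mul_assoc, one_div_mul_eq_div]
  refine le_mul_of_one_le_right (by positivity) ?_
  rw [one_le_div (by linarith)]
  linarith

theorem two_mul_abs_sub_abs_le {j : ℤ} (hj : j ≠ 0) (c d : ℝ) :
    2 * |d| - |c| ≤ |2 * (j : ℝ) * d + -1 * c| := by
  have h1 : (1 : ℝ) ≤ |(j : ℝ)| := by exact_mod_cast Int.one_le_abs hj
  have h2 := abs_sub_abs_le_abs_sub (2 * (j : ℝ) * d) c
  rw [abs_mul, abs_mul, abs_two] at h2
  rw [neg_one_mul, ← sub_eq_add_neg]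
  nlinarith [abs_nonneg d]

theorem one_lt_abs_two_mul_add {j : ℤ} (hj : j ≠ 0) {x : ℝ} (hx : x ∈ Set.Ioo (-1 : ℝ) 1) :
    1 < |2 * (j : ℝ) + x| := by
  have h1 := two_mul_abs_sub_abs_le hj (-x) 1
  have h2 : |x| < 1 := abs_lt.2 hx
  rw [abs_one, abs_neg, mul_one, mul_one, neg_one_mul, neg_neg] at h1
  linarith

/-- The inverse branches `x ↦ -1 / (2 j + x)`, `j ≠ 0`, of the Gauss-type map on `(-1, 1)`. -/
noncomputable def evenSystem : GradedInversionSystem {j : ℤ // j ≠ 0} where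
  n j := 2 * ((j : ℤ) : ℝ)
  ε := -1
  lo := -1
  hi := 1
  exceptional := Set.range fun k : ℤ => -1 / (k : ℝ)
  sq_ε := by norm_num
  add_ne_zero j x hx h := by
    obtain ⟨h1, h2⟩ := hx
    have h3 : (-1 : ℝ) < (j : ℤ) := by linarith
    have h4 : ((j : ℤ) : ℝ) < 1 := by linarith
    have h5 : -1 < (j : ℤ) := by exact_mod_cast h3
    have h6 : (j : ℤ) < 1 := by exact_mod_cast h4
    exact j.2 (by omega)
  mapsTo j x hx := by
    have h := one_lt_abs_two_mul_add j.2 hx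
    rw [Set.mem_Ioo, ← abs_lt, abs_div, abs_neg, abs_one, div_lt_one (by linarith)]
    exact h
  index_unique i j x hx y hy h := by
    obtain ⟨h1, h2⟩ := hx
    obtain ⟨h3, h4⟩ := hy
    have h5 : ((i : ℤ) : ℝ) < (j : ℤ) + 1 := by linarith
    have h6 : ((j : ℤ) : ℝ) < (i : ℤ) + 1 := by linarith
    have h7 : (i : ℤ) < (j : ℤ) + 1 := by exact_mod_cast h5
    have h8 : (j : ℤ) < (i : ℤ) + 1 := by exact_mod_cast h6
    exact Subtype.ext (by omega)
  countable_exceptional := Set.countable_range _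
  exists_branch y hy hyE := by
    have hy0 : y ≠ 0 := fun h => hyE ⟨0, by simp [h]⟩
    set t := -1 / y with ht
    have hty : -1 / t = y := by
      rw [ht]
      field_simp
    have htabs : 1 < |t| := by
      rw [ht, abs_div, abs_neg, abs_one, one_lt_div (abs_pos.2 hy0)]
      exact abs_lt.2 hy
    have h1 := Int.floor_le ((t + 1) / 2)
    have h2 := Int.lt_floor_add_one ((t + 1) / 2)
    set k := ⌊(t + 1) / 2⌋
    have hk1 : -1 < t - 2 * (k : ℝ) := by
      refine lt_of_le_of_ne (by linarith) fun h => hyE ⟨2 * k - 1, ?_⟩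
      push_cast
      rw [← hty]
      congr 1
      linarith
    have hk2 : t - 2 * (k : ℝ) < 1 := by linarith
    have hk0 : k ≠ 0 := by
      intro h
      rw [h, Int.cast_zero, mul_zero, sub_zero] at hk1 hk2
      exact absurd (abs_lt.2 ⟨hk1, hk2⟩) htabs.not_gt
    exact ⟨⟨k, hk0⟩, t - 2 * (k : ℝ), ⟨hk1, hk2⟩, by rw [add_sub_cancel, hty]⟩
  Good c d := |c| < |d|
  Adm m c d := 1 ≤ |d| - |c| ∧ 2 * m + 1 ≤ |d| ^ 2 - |c| ^ 2
  η m := 2 / (2 * m + 1)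
  good_step j c d h := by
    have := two_mul_abs_sub_abs_le j.2 c d
    linarith
  adm_zero := by norm_num
  adm_step m j c d h := by
    obtain ⟨h1, h2⟩ := h
    have h3 := two_mul_abs_sub_abs_le j.2 c d
    push_cast
    have h4 := abs_nonneg c
    refine ⟨by linarith, ?_⟩
    have h5 := pow_le_pow_left₀ (by linarith) h3 2
    nlinarith
  good_of_adm m c d h := by linarith [h.1]
  good_ne_zero c d h x hx h0 := by
    have h1 : |d| = |c| * |x| := by
      rw [← abs_mul, ← abs_neg d]
      congr 1
      linarith
    have h2 : |x| < 1 := abs_lt.2 hx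
    nlinarith [abs_nonneg c, abs_nonneg x]
  adm_ne_zero m c d h h0 := by
    have h1 := h.1
    rw [h0, abs_zero] at h1
    linarith [abs_nonneg c]
  adm_bound m c d h x hx := by
    obtain ⟨h1, h2⟩ := h
    have h3 : |x| < 1 := abs_lt.2 hx
    have h4 : |d| - |c| ≤ |c * x + d| := by
      have h5 := abs_sub_abs_le_abs_sub d (-(c * x))
      rw [abs_neg, abs_mul, sub_neg_eq_add, add_comm d] at h5
      nlinarith [abs_nonneg c, abs_nonneg x]
    rw [abs_mul, div_mul_eq_mul_div, le_div_iff₀ (by positivity)]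
    have h6 := mul_le_mul_of_nonneg_right h4 (abs_nonneg d)
    have h7 : |x| * (2 * m + 1) ≤ 1 * (2 * m + 1) :=
      mul_le_mul_of_nonneg_right h3.le (by positivity)
    nlinarith [abs_nonneg c]
  tendsto_η := by
    refine Tendsto.div_atTop tendsto_const_nhds ?_
    exact tendsto_atTop_add_const_right _ _
      (tendsto_natCast_atTop_atTop.const_mul_atTop two_pos)

section EvenSystem

variable {w : ℝ}

/-- The probability density on `(-1, 1)` proportional to `1 / (w x + 1) ^ 2`. -/
noncomputable def evenDensity (w x : ℝ) : ℝ := (1 - w ^ 2) / 2 * (1 / (w * x + 1) ^ 2)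

theorem mul_add_one_pos (hw : |w| < 1) {x : ℝ} (hx : x ∈ Set.Icc (-1 : ℝ) 1) :
    0 < w * x + 1 := by
  have h1 : |x| ≤ 1 := abs_le.2 hx
  have h2 := neg_abs_le (w * x)
  rw [abs_mul] at h2
  nlinarith [abs_nonneg w, abs_nonneg x]

theorem one_sub_sq_pos (hw : |w| < 1) : 0 < 1 - w ^ 2 := by
  have := (sq_lt_one_iff_abs_lt_one w).2 hw
  linarith

theorem continuousOn_evenDensity (hw : |w| < 1) :
    ContinuousOn (evenDensity w) (Set.Icc (-1 : ℝ) 1) := by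
  unfold evenDensity
  refine continuousOn_const.mul (continuousOn_const.div (by fun_prop) fun x hx => ?_)
  exact pow_ne_zero 2 (mul_add_one_pos hw hx).ne'

theorem integrable_evenDensity (hw : |w| < 1) : Integrable (evenDensity w) evenSystem.μ :=
  (continuousOn_evenDensity hw).integrableOn_Icc.mono_set Set.Ioo_subset_Icc_self

theorem evenDensity_nonneg (hw : |w| < 1) (x : ℝ) : 0 ≤ evenDensity w x := by
  have := one_sub_sq_pos hw
  unfold evenDensity
  positivity

theorem integral_evenDensity (hw : |w| < 1) : ∫ x, evenDensity w x ∂evenSystem.μ = 1 := by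
  have hpos := one_sub_sq_pos hw
  have h : ∫ x in (-1 : ℝ)..1, evenDensity w x = 1 := by
    have hder : ∀ x ∈ Set.uIcc (-1 : ℝ) 1,
        HasDerivAt (fun x => (1 - w ^ 2) / 2 * (x / (w * x + 1))) (evenDensity w x) x := by
      intro x hx
      rw [Set.uIcc_of_le (by norm_num)] at hx
      have hne := (mul_add_one_pos hw hx).ne'
      refine HasDerivAt.congr_deriv (((hasDerivAt_id' x).fun_div
        (((hasDerivAt_id' x).const_mul w).add_const 1) hne).const_mul ((1 - w ^ 2) / 2)) ?_
      unfold evenDensity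
      congr 2
      ring
    rw [intervalIntegral.integral_eq_sub_of_hasDerivAt hder]
    · have h1 := (mul_add_one_pos hw (x := 1) (by norm_num)).ne'
      have h2 := (mul_add_one_pos hw (x := -1) (by norm_num)).ne'
      rw [mul_one] at h1
      rw [mul_one, ← mul_sub, div_sub_div _ _ h1 h2, div_mul_div_comm,
        div_eq_one_iff_eq (mul_ne_zero two_ne_zero (mul_ne_zero h1 h2))]
      ring
    · refine ContinuousOn.intervalIntegrable ?_
      rw [Set.uIcc_of_le (by norm_num)]
      exact continuousOn_evenDensity hw
  rw [intervalIntegral.integral_of_le (by norm_num), integral_Ioc_eq_integral_Ioo] at h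
  exact h

/-- The densities `evenDensity w`, `|w| < 1`, as elements of `L¹`. -/
noncomputable def evenKernel (w : ℝ) : Lp ℝ 1 evenSystem.μ :=
  if hw : |w| < 1 then (integrable_evenDensity hw).toL1 _ else 0

theorem coeFn_evenKernel (hw : |w| < 1) : evenKernel w =ᵐ[evenSystem.μ] evenDensity w := by
  rw [evenKernel, dif_pos hw]
  exact Integrable.coeFn_toL1 _

theorem evenKernel_nonneg (hw : |w| < 1) : 0 ≤ evenKernel w := by
  rw [← Lp.coeFn_nonneg]
  filter_upwards [coeFn_evenKernel hw] with x hx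
  rw [hx]
  exact evenDensity_nonneg hw x

theorem norm_evenKernel (hw : |w| < 1) : ‖evenKernel w‖ = 1 := by
  rw [evenSystem.norm_eq_integral (evenKernel_nonneg hw),
    integral_congr_ae (coeFn_evenKernel hw), integral_evenDensity hw]

theorem evenKernel_mem (hw : |w| < 1) : evenKernel w ∈ evenSystem.kernelCone := by
  have hpos := one_sub_sq_pos hw
  have h : ((1 - w ^ 2) / 2)⁻¹ • evenKernel w ∈ evenSystem.kernels := by
    refine ⟨w, 1, show |w| < |1| by rwa [abs_one], ?_⟩
    filter_upwards [Lp.coeFn_smul ((1 - w ^ 2) / 2)⁻¹ (evenKernel w), coeFn_evenKernel hw]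
      with x h1 h2
    rw [h1, Pi.smul_apply, h2, smul_eq_mul, evenDensity, inv_mul_cancel_left₀ (by positivity)]
  have h' := evenSystem.isClosedCone_kernelCone.smul_mem ((1 - w ^ 2) / 2) (by positivity) _
    (subset_closedConeHull _ h)
  rwa [smul_inv_smul₀ (by positivity)] at h'

theorem even_kernelCone_subset {K : Set (Lp ℝ 1 evenSystem.μ)} (hK : IsClosedCone K)
    (h : ∀ w : ℝ, |w| < 1 → evenKernel w ∈ K) : evenSystem.kernelCone ⊆ K := by
  refine closedConeHull_subset hK ?_
  rintro z ⟨c, d, hcd, hz⟩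
  have hcd' : |c| < |d| := hcd
  have hd0 : 0 < |d| := (abs_nonneg c).trans_lt hcd'
  have hd : d ≠ 0 := abs_pos.1 hd0
  have hw : |c / d| < 1 := by rwa [abs_div, div_lt_one hd0]
  have hpos := one_sub_sq_pos hw
  have hz' : z = (1 / d ^ 2 * ((1 - (c / d) ^ 2) / 2)⁻¹) • evenKernel (c / d) := by
    refine Lp.ext ?_
    filter_upwards [hz, Lp.coeFn_smul (1 / d ^ 2 * ((1 - (c / d) ^ 2) / 2)⁻¹) (evenKernel (c / d)),
      coeFn_evenKernel hw] with x h1 h2 h3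
    rw [h1, h2, Pi.smul_apply, h3, smul_eq_mul, evenDensity, mul_assoc,
      inv_mul_cancel_left₀ (by positivity), one_div_mul_one_div, ← mul_pow]
    congr 2
    field_simp
  rw [hz']
  exact hK.smul_mem _ (by positivity) _ (h _ hw)

/-- The weight with which the branch `j` maps the density of parameter `w` to the one of
parameter `1 / (2 j - w)`. -/
noncomputable def evenWeight (j : ℤ) (w : ℝ) : ℝ := (1 - w ^ 2) / ((2 * j - w) ^ 2 - 1)

theorem one_lt_abs_two_mul_sub (hw : |w| < 1) {j : ℤ} (hj : j ≠ 0) : 1 < |2 * (j : ℝ) - w| := by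
  have := one_lt_abs_two_mul_add hj (x := -w) (abs_lt.1 (by rwa [abs_neg]))
  rwa [← sub_eq_add_neg] at this

theorem abs_one_div_lt (hw : |w| < 1) {j : ℤ} (hj : j ≠ 0) : |1 / (2 * (j : ℝ) - w)| < 1 := by
  have := one_lt_abs_two_mul_sub hw hj
  rwa [abs_div, abs_one, div_lt_one (by linarith)]

theorem evenWeight_pos (hw : |w| < 1) {j : ℤ} (hj : j ≠ 0) : 0 < evenWeight j w := by
  have h1 := (one_lt_sq_iff_one_lt_abs _).2 (one_lt_abs_two_mul_sub hw hj)
  exact div_pos (one_sub_sq_pos hw) (by linarith)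

theorem evenWeight_mul_evenDensity (hw : |w| < 1) {j : ℤ} (hj : j ≠ 0) (x : ℝ) :
    evenWeight j w * evenDensity (1 / (2 * j - w)) x
      = (1 - w ^ 2) / 2 * (1 / (x + (2 * j - w)) ^ 2) := by
  have h1 := (one_lt_sq_iff_one_lt_abs _).2 (one_lt_abs_two_mul_sub hw hj)
  rw [evenWeight, evenDensity]
  set D := 2 * (j : ℝ) - w
  have hD : D ≠ 0 := by
    intro h
    rw [h] at h1
    norm_num at h1
  have h2 : D ^ 2 - 1 ≠ 0 := by linarith
  have h3 : 1 / D * x + 1 = (x + D) / D := by field_simp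
  have h4 : 1 - (1 / D) ^ 2 = (D ^ 2 - 1) / D ^ 2 := by field_simp
  rw [h3, h4, div_pow, one_div_div]
  calc (1 - w ^ 2) / (D ^ 2 - 1) * ((D ^ 2 - 1) / D ^ 2 / 2 * (D ^ 2 / (x + D) ^ 2))
      = (1 - w ^ 2) / 2 * (1 / (x + D) ^ 2) * ((D ^ 2 - 1) / (D ^ 2 - 1)) * (D ^ 2 / D ^ 2) := by
        ring
    _ = (1 - w ^ 2) / 2 * (1 / (x + D) ^ 2) := by
        rw [div_self h2, div_self (pow_ne_zero 2 hD), mul_one, mul_one]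

theorem hasSum_transfer_evenKernel (hw : |w| < 1) :
    HasSum (fun j : {j : ℤ // j ≠ 0} =>
      evenWeight j w • evenKernel (1 / (2 * ((j : ℤ) : ℝ) - w)))
      (evenSystem.transferL1 (evenKernel w)) := by
  obtain ⟨b, hb, hsum⟩ := evenSystem.exists_hasSum_transferL1 (coeFn_evenKernel hw)
  convert hsum using 1
  ext1 j
  refine Lp.ext ?_
  filter_upwards [hb j, Lp.coeFn_smul (evenWeight j w) (evenKernel (1 / (2 * ((j : ℤ) : ℝ) - w))),
    coeFn_evenKernel (abs_one_div_lt hw j.2), evenSystem.ae_mem] with x h1 h2 h3 h4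
  rw [h1, h2, Pi.smul_apply, h3, smul_eq_mul, evenWeight_mul_evenDensity hw j.2]
  have h5 := evenSystem.branch_kernel j w 1 h4
  have h6 : evenSystem.branch j (evenDensity w) x
      = (1 - w ^ 2) / 2 * evenSystem.branch j (fun x => 1 / (w * x + 1) ^ 2) x := by
    simp only [InversionSystem.branch, evenDensity, smul_eq_mul]
    ring
  rw [h6, h5, one_mul, mul_one]
  simp only [evenSystem]
  rw [neg_one_mul, ← sub_eq_add_neg]

theorem transfer_evenKernel_sub_mem (hw : |w| < 1) (t : Finset {j : ℤ // j ≠ 0}) :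
    evenSystem.transferL1 (evenKernel w)
      - ∑ j ∈ t, evenWeight j w • evenKernel (1 / (2 * ((j : ℤ) : ℝ) - w))
      ∈ evenSystem.kernelCone :=
  evenSystem.isClosedCone_kernelCone.sub_sum_mem_of_hasSum (hasSum_transfer_evenKernel hw)
    (fun j => evenSystem.isClosedCone_kernelCone.smul_mem _ (evenWeight_pos hw j.2).le _
      (evenKernel_mem (abs_one_div_lt hw j.2))) t

theorem evenKernel_le_transfer (hw : |w| < 1) :
    evenKernel w ≤ (9 : ℝ) • evenSystem.transferL1 (evenKernel w) := by
  have main : ∀ j : {j : ℤ // j ≠ 0},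
      (∀ x ∈ Set.Ioo (-1 : ℝ) 1, (x + (2 * ((j : ℤ) : ℝ) - w)) ^ 2 ≤ 9 * (w * x + 1) ^ 2) →
      evenKernel w ≤ (9 : ℝ) • evenSystem.transferL1 (evenKernel w) := by
    intro j hj
    have h1 := evenSystem.nonneg_of_mem_kernelCone _ (transfer_evenKernel_sub_mem hw {j})
    rw [Finset.sum_singleton, sub_nonneg] at h1
    refine le_trans ?_ (smul_le_smul_of_nonneg_left h1 (by norm_num : (0 : ℝ) ≤ 9))
    rw [smul_smul, ← Lp.coeFn_le]
    filter_upwards [Lp.coeFn_smul (9 * evenWeight j w) (evenKernel (1 / (2 * ((j : ℤ) : ℝ) - w))),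
      coeFn_evenKernel hw, coeFn_evenKernel (abs_one_div_lt hw j.2), evenSystem.ae_mem]
      with x h2 h3 h4 hx
    rw [h2, Pi.smul_apply, h3, h4, smul_eq_mul, mul_assoc, evenWeight_mul_evenDensity hw j.2,
      evenDensity, mul_left_comm]
    have hpos := one_sub_sq_pos hw
    refine mul_le_mul_of_nonneg_left ?_ (by positivity)
    have h5 := mul_add_one_pos hw (Set.Ioo_subset_Icc_self hx)
    have h6 : x + (2 * ((j : ℤ) : ℝ) - w) ≠ 0 := by
      intro h
      have := one_lt_abs_two_mul_sub hw j.2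
      have hx' : |x| < 1 := abs_lt.2 hx
      rw [show 2 * ((j : ℤ) : ℝ) - w = -x by linarith, abs_neg] at this
      linarith
    rw [mul_one_div, div_le_div_iff₀ (by positivity) (by positivity), one_mul]
    exact hj x hx
  obtain ⟨hw1, hw2⟩ := abs_lt.1 hw
  rcases le_total 0 w with h0 | h0
  · refine main ⟨1, one_ne_zero⟩ fun x ⟨hx1, hx2⟩ => ?_
    have h1 : 0 ≤ x + (2 * ((1 : ℤ) : ℝ) - w) := by
      push_cast
      linarith
    have h2 : x + (2 * ((1 : ℤ) : ℝ) - w) ≤ 3 * (w * x + 1) := by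
      push_cast
      nlinarith
    have := pow_le_pow_left₀ h1 h2 2
    linarith
  · refine main ⟨-1, by norm_num⟩ fun x ⟨hx1, hx2⟩ => ?_
    have h1 : 0 ≤ -(x + (2 * ((-1 : ℤ) : ℝ) - w)) := by
      push_cast
      linarith
    have h2 : -(x + (2 * ((-1 : ℤ) : ℝ) - w)) ≤ 3 * (w * x + 1) := by
      push_cast
      nlinarith
    have := pow_le_pow_left₀ h1 h2 2
    linarith

theorem even_asymptoticNorm_sub_map (f : Lp ℝ 1 evenSystem.μ) :
    asymptoticNorm evenSystem.transferL1 (f - evenSystem.transferL1 f) = 0 :=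
  evenSystem.isMarkovOperator_transferL1.asymptoticNorm_sub_map_eq_zero
    evenSystem.transferL1_mem_kernelCone evenSystem.nonneg_of_mem_kernelCone evenSystem.absorbs
    (by norm_num : (1 : ℝ) ≤ 9)
    (even_kernelCone_subset (isClosedCone_le_smul_map _ 9) fun _ hw => evenKernel_le_transfer hw) f

/-- The asymptotic distance between the densities of parameters `w` and `0`. -/
noncomputable def evenGap (w : ℝ) : ℝ :=
  asymptoticNorm evenSystem.transferL1 (evenKernel w - evenKernel 0)

theorem evenGap_le (hw : |w| < 1) : evenGap w ≤ 4 * |w| := by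
  have hT := evenSystem.isMarkovOperator_transferL1
  have h0 : |(0 : ℝ)| < 1 := by norm_num
  set l := (1 - |w|) / (1 + |w|) with hl
  have hl0 : 0 ≤ l := div_nonneg (by linarith) (by positivity)
  have hl1 : 1 - l ≤ 2 * |w| := by
    have : 1 - l = 2 * |w| / (1 + |w|) := by
      rw [hl]
      field_simp
      ring
    rw [this]
    exact div_le_self (by positivity) (by linarith [abs_nonneg w])
  have hl2 : 0 ≤ 1 - l := by
    rw [sub_nonneg, hl, div_le_one (by positivity)]
    linarith [abs_nonneg w]
  have hle : l • evenKernel 0 ≤ evenKernel w := by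
    rw [← Lp.coeFn_le]
    filter_upwards [Lp.coeFn_smul l (evenKernel 0), coeFn_evenKernel hw, coeFn_evenKernel h0,
      evenSystem.ae_mem] with x h1 h2 h3 hx
    have hx' : |x| < 1 := abs_lt.2 hx
    have h4 := mul_add_one_pos hw (Set.Ioo_subset_Icc_self hx)
    have h5 : w * x + 1 ≤ 1 + |w| := by
      have := le_abs_self (w * x)
      rw [abs_mul] at this
      nlinarith [abs_nonneg w, abs_nonneg x]
    have h6 : l = (1 - w ^ 2) * (1 / (1 + |w|) ^ 2) := by
      rw [hl, ← sq_abs w]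
      field_simp
      ring
    rw [h1, Pi.smul_apply, h2, h3, smul_eq_mul, evenDensity, evenDensity, h6]
    have h7 : 1 / (1 + |w|) ^ 2 ≤ 1 / (w * x + 1) ^ 2 :=
      one_div_le_one_div_of_le (by positivity) (pow_le_pow_left₀ h4.le h5 2)
    have h8 := mul_le_mul_of_nonneg_left h7 (one_sub_sq_pos hw).le
    norm_num
    norm_num at h8
    linarith
  have hadd := hT.norm_add (l • evenKernel 0) (evenKernel w - l • evenKernel 0)
    (smul_nonneg hl0 (evenKernel_nonneg h0)) (sub_nonneg.2 hle)
  rw [add_sub_cancel, norm_smul, norm_evenKernel hw, norm_evenKernel h0,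
    Real.norm_of_nonneg hl0] at hadd
  have h1 := IsMarkovOperator.asymptoticNorm_le_norm evenSystem.transferL1
    (evenKernel w - evenKernel 0)
  have h2 : evenKernel w - evenKernel 0
      = (evenKernel w - l • evenKernel 0) - (1 - l) • evenKernel 0 := by
    module
  have h3 := norm_sub_le (evenKernel w - l • evenKernel 0) ((1 - l) • evenKernel 0)
  rw [← h2, norm_smul, norm_evenKernel h0, Real.norm_of_nonneg hl2] at h3
  rw [evenGap]
  linarith

theorem evenGap_le_of_bound {M : ℝ} (hM : ∀ v, |v| < 1 → evenGap v ≤ M) (hw : |w| < 1)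
    {i j : ℤ} (hi : i ≠ 0) (hj : j ≠ 0) (hij : i ≠ j) :
    evenWeight i w * (M - evenGap (1 / (2 * i - w)))
      + evenWeight j w * (M - evenGap (1 / (2 * j - w))) ≤ M - evenGap w := by
  have hT := evenSystem.isMarkovOperator_transferL1
  have h0 : |(0 : ℝ)| < 1 := by norm_num
  have hr := transfer_evenKernel_sub_mem hw {⟨i, hi⟩, ⟨j, hj⟩}
  rw [Finset.sum_pair (by simpa using hij)] at hr
  simp only at hr
  set P := evenKernel (1 / (2 * i - w)) with hP
  set Q := evenKernel (1 / (2 * j - w)) with hQ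
  set α := evenWeight i w
  set β := evenWeight j w
  set r := evenSystem.transferL1 (evenKernel w) - (α • P + β • Q) with hrdef
  have hα : 0 ≤ α := (evenWeight_pos hw hi).le
  have hβ : 0 ≤ β := (evenWeight_pos hw hj).le
  have hsum : evenSystem.transferL1 (evenKernel w) = α • P + β • Q + r := by
    rw [hrdef]
    abel
  have hPn := evenKernel_nonneg (abs_one_div_lt hw hi)
  have hQn := evenKernel_nonneg (abs_one_div_lt hw hj)
  have hαP := smul_nonneg hα hPn
  have hβQ := smul_nonneg hβ hQn
  have hrn : 1 = α + β + ‖r‖ := by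
    have h1 := hT.norm_map _ (evenKernel_nonneg hw)
    rw [hsum, hT.norm_add _ _ (add_nonneg hαP hβQ) (evenSystem.nonneg_of_mem_kernelCone _ hr),
      hT.norm_add _ _ hαP hβQ, norm_smul, norm_smul, norm_evenKernel hw,
      norm_evenKernel (abs_one_div_lt hw hi), norm_evenKernel (abs_one_div_lt hw hj),
      Real.norm_of_nonneg hα, Real.norm_of_nonneg hβ] at h1
    linarith
  have hrM : asymptoticNorm evenSystem.transferL1 (r - ‖r‖ • evenKernel 0) ≤ M * ‖r‖ := by
    refine (even_kernelCone_subset (isClosedCone_asymptoticNorm_le hT (evenKernel 0) M)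
      (fun v hv => ⟨evenKernel_nonneg hv, ?_⟩) hr).2
    rw [norm_evenKernel hv, one_smul, mul_one]
    exact hM v hv
  have hsplit : evenKernel w - evenKernel 0
      = (evenKernel w - evenSystem.transferL1 (evenKernel w)) + (α • (P - evenKernel 0)
        + β • (Q - evenKernel 0) + (r - ‖r‖ • evenKernel 0)) := by
    have h1 : ‖r‖ = 1 - α - β := by linarith
    rw [h1, hsum]
    module
  have e1 := hT.asymptoticNorm_add_le (evenKernel w - evenSystem.transferL1 (evenKernel w))
    (α • (P - evenKernel 0) + β • (Q - evenKernel 0) + (r - ‖r‖ • evenKernel 0))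
  rw [← hsplit, even_asymptoticNorm_sub_map] at e1
  have e2 := hT.asymptoticNorm_add_le (α • (P - evenKernel 0) + β • (Q - evenKernel 0))
    (r - ‖r‖ • evenKernel 0)
  have e3 := hT.asymptoticNorm_add_le (α • (P - evenKernel 0)) (β • (Q - evenKernel 0))
  rw [hT.asymptoticNorm_smul, hT.asymptoticNorm_smul, abs_of_nonneg hα, abs_of_nonneg hβ] at e3
  simp only [evenGap]
  rw [← hP, ← hQ]
  have h1 : ‖r‖ = 1 - α - β := by linarith
  rw [h1] at hrM e1 e2
  linarith

end EvenSystem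

section EvenSystem

theorem evenWeight_mul {σ : ℤ} (hσ : σ = 1 ∨ σ = -1) (j : ℤ) (w : ℝ) :
    evenWeight (σ * j) (σ * w) = evenWeight j w := by
  rcases hσ with rfl | rfl
  · simp
  · rw [evenWeight, evenWeight]
    push_cast
    congr 1 <;> ring

theorem one_div_two_mul_sub_mul {σ : ℤ} (hσ : σ = 1 ∨ σ = -1) (j : ℤ) (w : ℝ) :
    1 / (2 * ((σ * j : ℤ) : ℝ) - σ * w) = σ * (1 / (2 * j - w)) := by
  rcases hσ with rfl | rfl
  · simp
  · push_cast
    rw [show 2 * (-1 * (j : ℝ)) - -1 * w = -(2 * j - w) by ring, one_div_neg_eq_neg_one_div]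
    ring

theorem evenGap_le_of_bound_of_parabolic {M : ℝ} (hM : ∀ v, |v| < 1 → evenGap v ≤ M)
    {σ : ℤ} (hσ : σ = 1 ∨ σ = -1) {J : ℤ} (hJ : 2 ≤ J) (hMJ : 4 / (J : ℝ) ≤ M) {t : ℝ}
    (ht : 1 ≤ t) :
    (M - 4 / J) / (4 * (J : ℝ) ^ 2) / 2 ≤ M - evenGap (σ * (1 - 1 / t)) := by
  have hJ' : (2 : ℝ) ≤ J := by exact_mod_cast hJ
  have hσ0 : σ ≠ 0 := by omega
  have hσabs : |(σ : ℝ)| = 1 := by rcases hσ with rfl | rfl <;> norm_num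
  have hpar : ∀ t : ℝ, 1 ≤ t → 0 ≤ 1 - 1 / t ∧ 1 - 1 / t < 1 := by
    intro t ht
    have h1 : 1 / t ≤ 1 := by rwa [div_le_one (by linarith)]
    have h2 : 0 < 1 / t := by positivity
    constructor <;> linarith
  have hparσ : ∀ t : ℝ, 1 ≤ t → |(σ : ℝ) * (1 - 1 / t)| < 1 := by
    intro t ht
    obtain ⟨h1, h2⟩ := hpar t ht
    rwa [abs_mul, hσabs, one_mul, abs_of_nonneg h1]
  have hb : 0 ≤ M - 4 / (J : ℝ) := by linarith
  refine half_le_of_superharmonic (H := fun t => M - evenGap (σ * (1 - 1 / t))) (by positivity)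
    (fun t ht => sub_nonneg.2 (hM _ (hparσ t ht))) (fun t ht => ?_) t ht
  have key := evenGap_le_of_bound hM (hparσ t ht) (mul_ne_zero hσ0 one_ne_zero)
    (mul_ne_zero hσ0 (by omega : J ≠ 0)) (by simpa [hσ0] using (by omega : J ≠ 1))
  rw [one_div_two_mul_sub_mul hσ, one_div_two_mul_sub_mul hσ, evenWeight_mul hσ,
    evenWeight_mul hσ] at key
  have ht0 : 0 < t := by linarith
  have e1 : evenWeight 1 (1 - 1 / t) = (2 * t - 1) / (2 * t + 1) := by
    have h1 : 1 - (1 - 1 / t) ^ 2 = (2 * t - 1) / t ^ 2 := by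
      field_simp
      ring
    have h2 : (2 * ((1 : ℤ) : ℝ) - (1 - 1 / t)) ^ 2 - 1 = (2 * t + 1) / t ^ 2 := by
      push_cast
      field_simp
      ring
    rw [evenWeight, h1, h2, div_div_div_cancel_right₀ (by positivity)]
  have e2 : 1 / (2 * ((1 : ℤ) : ℝ) - (1 - 1 / t)) = 1 - 1 / (t + 1) := by
    have h1 : 2 * ((1 : ℤ) : ℝ) - (1 - 1 / t) = (t + 1) / t := by
      push_cast
      field_simp
      ring
    rw [h1, one_div_div]
    field_simp
    ring
  rw [e1, e2] at key
  obtain ⟨hw0, hw1⟩ := hpar t ht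
  set w := 1 - 1 / t with hw
  have e3 : 1 / (4 * (J : ℝ) ^ 2) / t ≤ evenWeight J w := by
    rw [evenWeight, div_div]
    have h1 : 1 / t ≤ 1 - w ^ 2 := by
      have : 1 / t = 1 - w := by rw [hw]; ring
      nlinarith
    have h2 : (2 * (J : ℝ) - w) ^ 2 - 1 ≤ 4 * (J : ℝ) ^ 2 := by nlinarith
    have h3 : 0 < (2 * (J : ℝ) - w) ^ 2 - 1 := by nlinarith
    rw [mul_comm, ← div_div]
    calc 1 / t / (4 * (J : ℝ) ^ 2) ≤ (1 - w ^ 2) / (4 * (J : ℝ) ^ 2) := by gcongr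
      _ ≤ (1 - w ^ 2) / ((2 * (J : ℝ) - w) ^ 2 - 1) :=
        div_le_div_of_nonneg_left (by nlinarith) h3 h2
  have e4 : M - 4 / (J : ℝ) ≤ M - evenGap (σ * (1 / (2 * J - w))) := by
    have h1 : |(σ : ℝ) * (1 / (2 * J - w))| ≤ 1 / J := by
      rw [abs_mul, hσabs, one_mul, abs_of_pos (one_div_pos.2 (by linarith))]
      exact one_div_le_one_div_of_le (by linarith) (by linarith)
    have h2 : 1 / (J : ℝ) < 1 := by rw [div_lt_one (by linarith)]; linarith
    have h3 := evenGap_le (h1.trans_lt h2)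
    have h4 : 4 / (J : ℝ) = 4 * (1 / J) := by ring
    rw [h4]
    linarith
  refine le_trans (add_le_add le_rfl ?_) key
  calc (M - 4 / (J : ℝ)) / (4 * (J : ℝ) ^ 2) / t
      = 1 / (4 * (J : ℝ) ^ 2) / t * (M - 4 / J) := by ring
    _ ≤ evenWeight J w * (M - evenGap (σ * (1 / (2 * J - w)))) :=
      mul_le_mul e3 e4 hb (le_trans (by positivity) e3)

theorem evenGap_nonpos {w : ℝ} (hw : |w| < 1) : evenGap w ≤ 0 := by
  have hbdd : BddAbove (Set.range fun v : {v : ℝ // |v| < 1} => evenGap v) := by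
    refine ⟨4, ?_⟩
    rintro _ ⟨v, rfl⟩
    have := evenGap_le v.2
    have := v.2
    simp only
    linarith
  set M := ⨆ v : {v : ℝ // |v| < 1}, evenGap v with hMdef
  have hM : ∀ v, |v| < 1 → evenGap v ≤ M := fun v hv => le_ciSup hbdd ⟨v, hv⟩
  have hMJ : ∀ J : ℤ, 2 ≤ J → M ≤ 4 / (J : ℝ) := by
    intro J hJ
    by_contra hlt
    rw [not_le] at hlt
    have hJ' : (2 : ℝ) ≤ J := by exact_mod_cast hJ
    set γ := (M - 4 / J) / (4 * (J : ℝ) ^ 2) / 2 with hγ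
    have hγ0 : 0 < γ := by
      have : 0 < M - 4 / (J : ℝ) := by linarith
      positivity
    have hall : ∀ v, |v| < 1 → evenGap v ≤ M - γ := by
      intro v hv
      have ht : 1 ≤ 1 / (1 - |v|) := by
        rw [one_le_div (by linarith)]
        linarith [abs_nonneg v]
      have hv' : 1 - 1 / (1 / (1 - |v|)) = |v| := by
        rw [one_div_one_div]
        ring
      rcases abs_choice v with h | h
      · have := evenGap_le_of_bound_of_parabolic hM (Or.inl rfl) hJ hlt.le ht
        rw [hv', h] at this
        push_cast at this
        rw [one_mul] at this
        linarith
      · have := evenGap_le_of_bound_of_parabolic hM (Or.inr rfl) hJ hlt.le ht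
        rw [hv', h] at this
        push_cast at this
        rw [neg_one_mul, neg_neg] at this
        linarith
    have : Nonempty {v : ℝ // |v| < 1} := ⟨⟨w, hw⟩⟩
    have : M ≤ M - γ := ciSup_le fun v => hall v v.2
    linarith
  have hM0 : M ≤ 0 := by
    refine ge_of_tendsto' (x := atTop) (f := fun k : ℕ => 4 / ((k : ℝ) + 2)) ?_ fun k => ?_
    · exact Tendsto.div_atTop tendsto_const_nhds
        (tendsto_atTop_add_const_right _ _ tendsto_natCast_atTop_atTop)
    · have := hMJ (k + 2) (by omega)
      push_cast at this
      exact this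
  exact (hM w hw).trans hM0

theorem evenSystem_asymptoticNorm (z : Lp ℝ 1 evenSystem.μ) (hz : ‖z⁺‖ = ‖z⁻‖) :
    asymptoticNorm evenSystem.transferL1 z = 0 := by
  have hT := evenSystem.isMarkovOperator_transferL1
  have h0 : |(0 : ℝ)| < 1 := by norm_num
  refine hT.asymptoticNorm_eq_zero_of_asymptotic evenSystem.transferL1_mem_kernelCone
    evenSystem.absorbs (evenKernel_mem h0) (evenKernel_nonneg h0) (norm_evenKernel h0)
    (fun g hg => ?_) hz
  have h := (even_kernelCone_subset (isClosedCone_asymptoticNorm_le hT (evenKernel 0) 0)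
    (fun v hv => ⟨evenKernel_nonneg hv, ?_⟩) hg).2
  · rwa [zero_mul] at h
  · rw [norm_evenKernel hv, one_smul, zero_mul]
    exact evenGap_nonpos hv

end EvenSystem

theorem T1op_eq_transfer : T1op = evenSystem.transfer := by
  ext f x
  exact tsum_congr fun j => (Complex.real_smul ..).symm

theorem S1op_eq_transfer : S1op = gaussSystem.transfer := by
  ext f x
  exact tsum_congr fun j => (Complex.real_smul ..).symm

/-- Contractivity of `T₁` on `L¹(-1,1)` and exactness: the iterates of `T₁`
resp. `S₁` of a mean-zero `L¹` function tend to `0` in `L¹`. -/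
theorem stmt_19 :
    (∀ f : ℝ → ℂ, IntegrableOn f (Set.Ioo (-1 : ℝ) 1) →
      (∀ᵐ x ∂(volume.restrict (Set.Ioo (-1 : ℝ) 1)),
        Summable fun j : {j : ℤ // j ≠ 0} =>
          ‖((1 / (2 * ((j : ℤ) : ℝ) + x) ^ 2 : ℝ) : ℂ) *
            f (-1 / (2 * ((j : ℤ) : ℝ) + x))‖) ∧
      IntegrableOn (T1op f) (Set.Ioo (-1 : ℝ) 1) ∧
      (∫ x in Set.Ioo (-1 : ℝ) 1, ‖T1op f x‖) ≤ (∫ x in Set.Ioo (-1 : ℝ) 1, ‖f x‖) ∧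
      ((∫ x in Set.Ioo (-1 : ℝ) 1, f x) = 0 →
        Tendsto (fun n : ℕ => ∫ x in Set.Ioo (-1 : ℝ) 1, ‖T1op^[n] f x‖)
          atTop (nhds 0))) ∧
    (∀ f : ℝ → ℂ, IntegrableOn f (Set.Ioo (0 : ℝ) 1) →
      (∫ x in Set.Ioo (0 : ℝ) 1, f x) = 0 →
      Tendsto (fun n : ℕ => ∫ x in Set.Ioo (0 : ℝ) 1, ‖S1op^[n] f x‖)
        atTop (nhds 0)) := by
  refine ⟨fun f hf => ⟨?_, ?_, ?_, fun hf0 => ?_⟩, fun f hf hf0 => ?_⟩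
  · filter_upwards [evenSystem.ae_summable_norm hf] with x hx
    exact hx.congr fun j => congrArg norm (Complex.real_smul ..)
  · rw [T1op_eq_transfer]
    exact evenSystem.integrable_transfer hf
  · rw [T1op_eq_transfer]
    exact evenSystem.integral_norm_transfer_le hf
  · rw [T1op_eq_transfer]
    exact evenSystem.tendsto_integral_norm_iterate hf hf0 evenSystem_asymptoticNorm
  · rw [S1op_eq_transfer]
    exact gaussSystem.tendsto_integral_norm_iterate hf hf0 gaussSystem_asymptoticNorm
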